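/- arXiv:1109.5726 — 2 statements merged into one kernel-verified Lean document; each statement's English description precedes it below -/
import Mathlib

section
/- Let X, Y be Banach spaces and ‖·‖ a norm on the direct sum X ⊕ Y. Suppose x* ∈ X* and y* ∈ Y* (viewed as functionals on X ⊕ Y) satisfy: ‖x*‖ = ‖x* + y*‖ = 1; the partial Fréchet differential ∂/∂x* of the dual norm exists at x*; and the partial Fréchet differential ∂/∂y* of the dual norm exists at x* + y* and equals 0. Then the dual norm is Fréchet differentiable at x* + y*. -/
set_option synthInstance.maxHeartbeats 1000000
set_option maxHeartbeats 1000000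

/-- The annihilator of a subspace `S` of `Z` inside the continuous dual of `Z`:
functionals vanishing on `S`.  Functionals in `annih Z Ysub` play the role of
elements of `X*` when `Z = X ⊕ Y`. -/
noncomputable def annih (Z : Type*) [NormedAddCommGroup Z] [NormedSpace ℝ Z] (S : Submodule ℝ Z) :
    Submodule ℝ (Z →L[ℝ] ℝ) where
  carrier := {f | ∀ v ∈ S, f v = 0}
  add_mem' := by intro a b ha hb v hv; simp [ha v hv, hb v hv]
  zero_mem' := by intro v hv; simp
  smul_mem' := by intro c a ha v hv; simp [ha v hv]

/-!
At a point `x` of a normed space, consider the functionals `φ` of the dual unit ball with `φ x`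
close to `‖x‖`. By Šmulyan's criterion, the norm is Fréchet differentiable at `x` along a subspace
with derivative `G` exactly when the restrictions of these `φ` to the subspace converge to `G` in
norm as `φ x → ‖x‖`.

Let `E = S ⊕ T`, `y ∈ T`, `‖x + y‖ = ‖x‖`, and let `φ` run through the dual unit ball with
`φ (x + y) → ‖x + y‖`. The vanishing derivative along `T` at `x + y` gives `φ|_T → 0`. In particular
`φ y → 0`, hence `φ x → ‖x‖`, and differentiability along `S` at `x` makes `φ|_S` converge. So `φ`
itself converges in norm, which is differentiability of the norm at `x + y`. Applied with the dual
of `X ⊕ Y` as `E`, and `X*`, `Y*` as `S`, `T`, this is the theorem.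
-/

open Filter Topology Metric

theorem opNorm_le_of_shell_of_apply_le {F : Type*} [SeminormedAddCommGroup F] [NormedSpace ℝ F]
    {g : F →L[ℝ] ℝ} {C δ : ℝ} (hC : 0 ≤ C) (hδ : 0 < δ)
    (hg : ∀ u, δ / 2 ≤ ‖u‖ → ‖u‖ < δ → g u ≤ C * ‖u‖) : ‖g‖ ≤ C := by
  refine ContinuousLinearMap.opNorm_le_of_shell (c := (2 : ℝ)) hδ hC (by norm_num)
    fun u hu hu' => abs_le'.2 ⟨hg u (by simpa using hu) hu', ?_⟩
  simpa using hg (-u) (by simpa using hu) (by simpa using hu')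

section Smulyan

variable {E F : Type*} [SeminormedAddCommGroup E] [NormedSpace ℝ E]
  [NormedAddCommGroup F] [NormedSpace ℝ F]

/-- The filter of functionals `φ` in the closed dual unit ball for which `φ x` tends to `‖x‖`. It
is generated by the slices `{φ | ‖φ‖ ≤ 1 ∧ ‖x‖ - η < φ x}` of the dual ball, and convergence along
it is the condition in Šmulyan's criterion for differentiability of the norm at `x`. -/
def normingFilter (x : E) : Filter (StrongDual ℝ E) :=
  comap (fun φ => φ x) (𝓝 ‖x‖) ⊓ 𝓟 (closedBall 0 1)

theorem tendsto_normingFilter {α : Type*} {l : Filter α} {x : E} {φ : α → StrongDual ℝ E} :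
    Tendsto φ l (normingFilter x) ↔
      Tendsto (fun a => φ a x) l (𝓝 ‖x‖) ∧ ∀ᶠ a in l, ‖φ a‖ ≤ 1 := by
  simp [normingFilter, tendsto_inf, tendsto_comap_iff, Function.comp_def]

theorem tendsto_apply_normingFilter (x : E) :
    Tendsto (fun φ : StrongDual ℝ E => φ x) (normingFilter x) (𝓝 ‖x‖) :=
  (tendsto_normingFilter.1 tendsto_id).1

theorem eventually_norm_le_one_normingFilter (x : E) : ∀ᶠ φ in normingFilter x, ‖φ‖ ≤ 1 :=
  (tendsto_normingFilter.1 tendsto_id).2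

theorem apply_le_norm_of_norm_le_one {φ : StrongDual ℝ E} (hφ : ‖φ‖ ≤ 1) (x : E) : φ x ≤ ‖x‖ :=
  (le_abs_self _).trans (by simpa using φ.le_of_opNorm_le hφ x)

theorem tendsto_comp_of_hasFDerivAt_norm_add {x : E} {A : F →L[ℝ] E} {G : F →L[ℝ] ℝ}
    (h : HasFDerivAt (fun u => ‖x + A u‖) G 0) :
    Tendsto (fun φ : StrongDual ℝ E => φ ∘L A) (normingFilter x) (𝓝 G) := by
  refine nhds_basis_closedBall.tendsto_right_iff.2 fun ε hε => ?_
  obtain ⟨δ, hδ, hnorm⟩ := eventually_nhds_iff_ball.1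
    ((hasFDerivAt_iff_isLittleO_nhds_zero.1 h).def (half_pos hε))
  filter_upwards [eventually_norm_le_one_normingFilter x,
    (tendsto_apply_normingFilter x).eventually_const_le
      (sub_lt_self ‖x‖ (by positivity : 0 < ε / 2 * (δ / 2)))] with φ hφ hφx
  rw [mem_closedBall_iff_norm]
  -- The slice has fixed width, absorbed by `‖u‖` only away from `0`; hence the estimate on a shell.
  refine opNorm_le_of_shell_of_apply_le hε.le hδ fun u hu hu' => ?_
  have hdiff : ‖x + A u‖ - ‖x‖ - G u ≤ ε / 2 * ‖u‖ := by
    simpa using (le_abs_self _).trans (hnorm u (by simpa using hu'))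
  have hφu : φ x + φ (A u) ≤ ‖x + A u‖ := by
    simpa using apply_le_norm_of_norm_le_one hφ (x + A u)
  have hslack : ε / 2 * (δ / 2) ≤ ε / 2 * ‖u‖ := by gcongr
  calc (φ ∘L A - G) u = φ (A u) - G u := rfl
    _ ≤ ε * ‖u‖ := by linarith

theorem tendsto_normingFilter_of_apply_eq_norm {α : Type*} {l : Filter α} {x : E} {z : α → E}
    {φ : α → StrongDual ℝ E} (hz : Tendsto z l (𝓝 x)) (hφ : ∀ a, ‖φ a‖ ≤ 1)
    (hφz : ∀ a, φ a (z a) = ‖z a‖) : Tendsto φ l (normingFilter x) := by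
  refine tendsto_normingFilter.2 ⟨?_, .of_forall hφ⟩
  have hφ0 : Tendsto (fun a => φ a (z a - x)) l (𝓝 0) :=
    squeeze_zero_norm (fun a => (φ a).le_of_opNorm_le (hφ a) _)
      (by simpa using (hz.sub_const x).norm)
  have hnorm : Tendsto (fun a => ‖z a‖ - φ a (z a - x)) l (𝓝 ‖x‖) := by
    simpa using hz.norm.sub hφ0
  exact hnorm.congr fun a => by rw [← hφz a, map_sub, sub_sub_cancel]

theorem hasFDerivAt_norm_add_of_tendsto_comp {x : E} {A : F →L[ℝ] E} {G : F →L[ℝ] ℝ}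
    (h : Tendsto (fun φ : StrongDual ℝ E => φ ∘L A) (normingFilter x) (𝓝 G)) :
    HasFDerivAt (fun u => ‖x + A u‖) G 0 := by
  choose φ hφ hφA using fun u => exists_dual_vector'' ℝ (x + A u)
  have hφ0x : φ 0 x = ‖x‖ := by simpa using hφA 0
  have hG : φ 0 ∘L A = G := by
    have hconst : Tendsto (fun _ : F => φ 0) (𝓝 0) (normingFilter x) :=
      tendsto_normingFilter_of_apply_eq_norm tendsto_const_nhds (fun _ => hφ 0) fun _ => hφ0x
    exact tendsto_nhds_unique tendsto_const_nhds (h.comp hconst)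
  have hφG : Tendsto (fun u => φ u ∘L A - G) (𝓝 0) (𝓝 0) := by
    have hA : Tendsto (fun u => x + A u) (𝓝 0) (𝓝 x) :=
      Continuous.tendsto' (by fun_prop) _ _ (by simp)
    simpa using (h.comp (tendsto_normingFilter_of_apply_eq_norm hA hφ hφA)).sub_const G
  rw [hasFDerivAt_iff_isLittleO_nhds_zero, Asymptotics.isLittleO_iff]
  intro ε hε
  filter_upwards [hφG.norm.eventually_le_const (by simpa using hε)] with u hu
  have lower : 0 ≤ ‖x + A u‖ - ‖x‖ - G u := by
    have hGu : φ 0 x + G u ≤ ‖x + A u‖ := by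
      simpa [← hG] using apply_le_norm_of_norm_le_one (hφ 0) (x + A u)
    linarith
  have upper : ‖x + A u‖ - ‖x‖ - G u ≤ (φ u ∘L A - G) u := by
    have hφu : φ u x + φ u (A u) = ‖x + A u‖ := by simpa using hφA u
    calc ‖x + A u‖ - ‖x‖ - G u ≤ φ u (A u) - G u := by
          linarith [apply_le_norm_of_norm_le_one (hφ u) x]
      _ = (φ u ∘L A - G) u := rfl
  simp only [zero_add, map_zero, add_zero]
  rw [Real.norm_of_nonneg lower]
  exact upper.trans ((le_abs_self _).trans ((φ u ∘L A - G).le_of_opNorm_le hu u))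

theorem hasFDerivAt_norm_add_iff_tendsto_comp {x : E} {A : F →L[ℝ] E} {G : F →L[ℝ] ℝ} :
    HasFDerivAt (fun u => ‖x + A u‖) G 0 ↔
      Tendsto (fun φ : StrongDual ℝ E => φ ∘L A) (normingFilter x) (𝓝 G) :=
  ⟨tendsto_comp_of_hasFDerivAt_norm_add, hasFDerivAt_norm_add_of_tendsto_comp⟩

end Smulyan

theorem normingFilter_add_le {E : Type*} [SeminormedAddCommGroup E] [NormedSpace ℝ E] {x y : E}
    (hnorm : ‖x + y‖ = ‖x‖)
    (hy : Tendsto (fun φ : StrongDual ℝ E => φ y) (normingFilter (x + y)) (𝓝 0)) :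
    normingFilter (x + y) ≤ normingFilter x := by
  refine tendsto_id'.1 (tendsto_normingFilter.2
    ⟨?_, eventually_norm_le_one_normingFilter (x + y)⟩)
  simpa [hnorm] using (tendsto_apply_normingFilter (x + y)).sub hy

theorem tendsto_of_tendsto_comp_subtypeL {𝕜 E F : Type*} [NontriviallyNormedField 𝕜]
    [SeminormedAddCommGroup E] [NormedSpace 𝕜 E] [SeminormedAddCommGroup F] [NormedSpace 𝕜 F]
    {S T : Submodule 𝕜 E} (hST : S.IsTopCompl T) {α : Type*} {l : Filter α}
    {φ : α → E →L[𝕜] F} {G : S →L[𝕜] F} {H : T →L[𝕜] F}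
    (hS : Tendsto (fun a => φ a ∘L S.subtypeL) l (𝓝 G))
    (hT : Tendsto (fun a => φ a ∘L T.subtypeL) l (𝓝 H)) :
    Tendsto φ l
      (𝓝 (G ∘L S.projectionOntoL T hST + H ∘L T.projectionOntoL S hST.symm)) := by
  have hsum := (((S.projectionOntoL T hST).precomp F).continuous.tendsto G |>.comp hS).add
    (((T.projectionOntoL S hST.symm).precomp F).continuous.tendsto H |>.comp hT)
  refine hsum.congr fun a => ContinuousLinearMap.ext fun z => ?_
  simp [← map_add, Submodule.projection_add_projection_eq_self]

theorem frechet_differentiable_of_partials_general {E : Type*} [NormedAddCommGroup E]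
    [NormedSpace ℝ E] {S T : Submodule ℝ E} (hST : S.IsTopCompl T) {x y : E} (hy : y ∈ T)
    (hnorm : ‖x + y‖ = ‖x‖) (hS : DifferentiableAt ℝ (fun u : S => ‖x + u‖) 0)
    (hT : HasFDerivAt (fun v : T => ‖x + y + v‖) (0 : T →L[ℝ] ℝ) 0) :
    DifferentiableAt ℝ (fun z : E => ‖z‖) (x + y) := by
  obtain ⟨G, hG⟩ := hS
  let restrict (V : Submodule ℝ E) (φ : StrongDual ℝ E) : StrongDual ℝ V := φ ∘L V.subtypeL
  have hφT : Tendsto (restrict T) (normingFilter (x + y)) (𝓝 0) :=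
    hasFDerivAt_norm_add_iff_tendsto_comp.1 hT
  have hφy : Tendsto (fun φ => φ y) (normingFilter (x + y)) (𝓝 0) :=
    ((ContinuousLinearMap.apply ℝ ℝ (⟨y, hy⟩ : T)).continuous.tendsto 0).comp hφT
  have hφS : Tendsto (restrict S) (normingFilter (x + y)) (𝓝 G) :=
    (hasFDerivAt_norm_add_iff_tendsto_comp.1 hG).mono_left (normingFilter_add_le hnorm hφy)
  have hφ := tendsto_of_tendsto_comp_subtypeL hST hφS hφT
  have hnorm_add := hasFDerivAt_norm_add_iff_tendsto_comp (A := .id ℝ E).2 hφ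
  simpa using ((hasFDerivAt_comp_add_left (x + y)).1 hnorm_add).differentiableAt

theorem mem_annih {Z : Type*} [NormedAddCommGroup Z] [NormedSpace ℝ Z] {S : Submodule ℝ Z}
    {f : Z →L[ℝ] ℝ} : f ∈ annih Z S ↔ ∀ v ∈ S, f v = 0 :=
  Iff.rfl

theorem isTopCompl_annih {Z : Type*} [NormedAddCommGroup Z] [NormedSpace ℝ Z] {p q : Submodule ℝ Z}
    (h : p.IsTopCompl q) : (annih Z q).IsTopCompl (annih Z p) := by
  let π : Z →L[ℝ] Z := p.projectionL q h
  let P : (Z →L[ℝ] ℝ) →L[ℝ] (Z →L[ℝ] ℝ) := π.precomp ℝ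
  have hP : IsIdempotentElem P := ContinuousLinearMap.ext fun g =>
    congrArg (g ∘L ·) (Submodule.isIdempotentElem_projectionL h)
  have hπp (v : Z) (hv : v ∈ p) : π v = v := (Submodule.projectionL_eq_self_iff h v).2 hv
  have hπq (v : Z) (hv : v ∈ q) : π v = 0 := (Submodule.projectionL_apply_eq_zero_iff h).2 hv
  have hrange : P.range = annih Z q := by
    ext g
    rw [LinearMap.mem_range, mem_annih]
    constructor
    · rintro ⟨f, rfl⟩ v hv
      simp [P, hπq v hv]
    · refine fun hg => ⟨g, ContinuousLinearMap.ext fun z => ?_⟩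
      have hzq : z - π z ∈ q :=
        Submodule.projectionL_eq_self_sub_projectionL h z ▸ Submodule.projectionL_apply_mem h.symm z
      exact (sub_eq_zero.1 ((map_sub g z (π z)).symm.trans (hg _ hzq))).symm
  have hker : P.ker = annih Z p := by
    ext g
    rw [LinearMap.mem_ker, mem_annih]
    refine ⟨fun hg v hv => ?_, fun hg => ContinuousLinearMap.ext fun z =>
      hg _ (Submodule.projectionL_apply_mem h z)⟩
    rw [← hπp v hv]
    exact DFunLike.congr_fun hg v
  exact hrange ▸ hker ▸ ContinuousLinearMap.IsIdempotentElem.isTopCompl hP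

/-- Let `Z = X ⊕ Y` be a Banach space which is the direct sum of two
closed subspaces `Xsub` and `Ysub`, and identify `X*` (resp. `Y*`) with the space of
continuous functionals on `Z` vanishing on `Ysub` (resp. `Xsub`).  Suppose `x* ∈ X*`,
`y* ∈ Y*` satisfy `‖x*‖ = ‖x* + y*‖ = 1`, the partial Fréchet differential `∂/∂x*` of the
dual norm exists at `x*`, and the partial Fréchet differential `∂/∂y*` of the dual norm at
`x* + y*` exists and equals `0`.  Then the dual norm is Fréchet differentiable at
`x* + y*`. -/
theorem frechet_differentiable_of_partials
    (Z : Type*) [NormedAddCommGroup Z] [NormedSpace ℝ Z] [CompleteSpace Z]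
    (Xsub Ysub : Submodule ℝ Z)
    (hXc : IsClosed (Xsub : Set Z)) (hYc : IsClosed (Ysub : Set Z))
    (hcompl : IsCompl Xsub Ysub)
    (xs ys : Z →L[ℝ] ℝ)
    (hxs : xs ∈ annih Z Ysub) (hys : ys ∈ annih Z Xsub)
    (hxn : ‖xs‖ = 1) (hxyn : ‖xs + ys‖ = 1)
    (hpartX : DifferentiableAt ℝ
      (fun u : annih Z Ysub => ‖xs + (u : Z →L[ℝ] ℝ)‖) 0)
    (hpartY : HasFDerivAt
      (fun v : annih Z Xsub => ‖xs + ys + (v : Z →L[ℝ] ℝ)‖)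
      (0 : (annih Z Xsub) →L[ℝ] ℝ) 0) :
    DifferentiableAt ℝ (fun g : Z →L[ℝ] ℝ => ‖g‖) (xs + ys) := by
  have hXY : Xsub.IsTopCompl Ysub := Submodule.IsCompl.isTopCompl_of_isClosed hcompl hXc hYc
  exact frechet_differentiable_of_partials_general (isTopCompl_annih hXY) hys
    (hxyn.trans hxn.symm) hpartX hpartY
end

section
/- If a separable Banach space X contains an isometric copy of every separable reflexive Banach space whose norm (equivalently whose dual norm) is Fréchet smooth, then X contains an isometric copy of every separable Banach space. The same conclusion holds if X contains an isometric copy of every separable Banach space with Fréchet smooth dual. -/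
/-!
The space `E = C(2^ℕ)` is universal for separable spaces by the Banach–Mazur theorem, so it suffices
to embed it into `X`. It carries commuting contractive finite-rank projections `P n → 1`, and the
norm of `(P n).range` is the maximum of finitely many functionals. Fix a dense family of operators
`(P n).range → X`. An infinite chain of members of this family, each almost isometric and almost
extending the preceding one, has an isometric embedding of `E` as its limit.

If there is no such chain, the extension relation is well-founded, and recursion along it glues
spaces `Y q ≅ (P n).range × ℓ²(Y q' : q' extends q)` into one separable reflexive space, which
contains a copy of a piece of `E` for every finite chain. Reflexive spaces of this kind carry smooth
and strongly rotund functions of quadratic growth. Adding to such a function penalties for the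
functionals that detect the pieces, only finitely many of which are active near any point, gives a
norm which is Fréchet smooth, or has Fréchet smooth dual, and for which the pieces are almost
isometric. A linear isometric embedding of that space into `X` can be followed along the pieces to
produce, by density, an infinite chain after all.
-/

namespace FrechetUniversality

open Set Filter Topology

universe u

/-! ### Reflexive spaces -/

/-- Reflexivity of a real normed space: the canonical map into the bidual is onto. -/
def IsReflexiveSpace (Y : Type*) [NormedAddCommGroup Y] [NormedSpace ℝ Y] : Prop :=
  Function.Surjective (NormedSpace.inclusionInDoubleDual ℝ Y)

namespace IsReflexiveSpace

variable {Y : Type*} {Y' : Type*} [NormedAddCommGroup Y] [NormedSpace ℝ Y]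
  [NormedAddCommGroup Y'] [NormedSpace ℝ Y']

theorem iff_exists_forall_apply_eq :
    IsReflexiveSpace Y ↔ ∀ F : StrongDual ℝ (StrongDual ℝ Y), ∃ y : Y,
      ∀ f : StrongDual ℝ Y, F f = f y := by
  refine forall_congr' fun F => exists_congr fun y => ?_
  simp [ContinuousLinearMap.ext_iff, eq_comm]

theorem congr (h : IsReflexiveSpace Y) (e : Y ≃L[ℝ] Y') : IsReflexiveSpace Y' := by
  rw [iff_exists_forall_apply_eq] at h ⊢
  intro F
  obtain ⟨y, hy⟩ := h (F.comp (ContinuousLinearMap.precomp ℝ (e.symm : Y' →L[ℝ] Y)))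
  refine ⟨e y, fun f => ?_⟩
  have hf : f = (f.comp (e : Y →L[ℝ] Y')).comp (e.symm : Y' →L[ℝ] Y) := by ext; simp
  rw [hf]
  simpa using hy (f.comp (e : Y →L[ℝ] Y'))

theorem prod (h : IsReflexiveSpace Y) (h' : IsReflexiveSpace Y') :
    IsReflexiveSpace (Y × Y') := by
  rw [iff_exists_forall_apply_eq] at h h' ⊢
  intro F
  obtain ⟨y, hy⟩ := h (F.comp (ContinuousLinearMap.precomp ℝ (.fst ℝ Y Y')))
  obtain ⟨y', hy'⟩ := h' (F.comp (ContinuousLinearMap.precomp ℝ (.snd ℝ Y Y')))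
  refine ⟨(y, y'), fun f => ?_⟩
  have hf : f = (f.comp (.inl ℝ Y Y')).comp (.fst ℝ Y Y') +
      (f.comp (.inr ℝ Y Y')).comp (.snd ℝ Y Y') := by
    ext p <;> simp [← Prod.zero_eq_mk]
  calc F f = F ((f.comp (.inl ℝ Y Y')).comp (.fst ℝ Y Y')) +
        F ((f.comp (.inr ℝ Y Y')).comp (.snd ℝ Y Y')) := by rw [← map_add, ← hf]
    _ = f.comp (.inl ℝ Y Y') y + f.comp (.inr ℝ Y Y') y' :=
        congrArg₂ (· + ·) (hy _) (hy' _)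
    _ = f (y, y') := by simp [← map_add]

theorem of_finiteDimensional [FiniteDimensional ℝ Y] : IsReflexiveSpace Y := by
  have finrank_dual : ∀ (W : Type _) [NormedAddCommGroup W] [NormedSpace ℝ W]
      [FiniteDimensional ℝ W], Module.finrank ℝ (StrongDual ℝ W) = Module.finrank ℝ W :=
    fun W _ _ _ => (LinearMap.toContinuousLinearMap (𝕜 := ℝ) (E := W)
      (F' := ℝ)).finrank_eq.symm.trans Subspace.dual_finrank_eq
  refine (LinearMap.injective_iff_surjective_of_finrank_eq_finrank
    (f := (NormedSpace.inclusionInDoubleDual ℝ Y).toLinearMap) ?_).1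
    (NormedSpace.inclusionInDoubleDualLi (E := Y) ℝ).injective
  rw [finrank_dual (StrongDual ℝ Y), finrank_dual Y]

theorem exists_norm_eq_one_apply_eq_norm (h : IsReflexiveSpace Y) {f : StrongDual ℝ Y}
    (hf : f ≠ 0) : ∃ y : Y, ‖y‖ = 1 ∧ f y = ‖f‖ := by
  obtain ⟨F, hF, hFf⟩ := exists_dual_vector ℝ f (norm_ne_zero_iff.2 hf)
  obtain ⟨y, rfl⟩ := h F
  exact ⟨y, ((NormedSpace.inclusionInDoubleDualLi (E := Y) ℝ).norm_map y).symm.trans hF, hFf⟩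

theorem exists_norm_le_one_apply_eq_norm (h : IsReflexiveSpace Y) (f : StrongDual ℝ Y) :
    ∃ y : Y, ‖y‖ ≤ 1 ∧ f y = ‖f‖ := by
  rcases eq_or_ne f 0 with rfl | hf
  · exact ⟨0, by simp⟩
  · obtain ⟨y, hy, hfy⟩ := h.exists_norm_eq_one_apply_eq_norm hf
    exact ⟨y, hy.le, hfy⟩

theorem exists_weak_limit (h : IsReflexiveSpace Y) {ι : Type*} (U : Ultrafilter ι) {y : ι → Y}
    {C : ℝ} (hy : ∀ i, ‖y i‖ ≤ C) :
    ∃ x : Y, ∀ f : StrongDual ℝ Y, Tendsto (fun i => f (y i)) U (𝓝 (f x)) := by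
  let J : ι → WeakDual ℝ (StrongDual ℝ Y) := fun i =>
    StrongDual.toWeakDual (NormedSpace.inclusionInDoubleDual ℝ Y (y i))
  have hJ : ∀ i, J i ∈ WeakDual.toStrongDual ⁻¹' Metric.closedBall 0 C := fun i => by
    refine (dist_zero_right (NormedSpace.inclusionInDoubleDual ℝ Y (y i))).le.trans ?_
    exact ((NormedSpace.inclusionInDoubleDualLi (E := Y) ℝ).norm_map (y i)).le.trans (hy i)
  obtain ⟨F, -, hF⟩ := (WeakDual.isCompact_closedBall (𝕜 := ℝ) (0 : StrongDual ℝ _) C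
    ).ultrafilter_le_nhds (U.map J) (le_principal_iff.2 (mem_map.2 (univ_mem' hJ)))
  obtain ⟨x, hx⟩ := h (WeakDual.toStrongDual F)
  refine ⟨x, fun f => ?_⟩
  have hFf : F f = f x := (DFunLike.congr_fun hx f).symm
  rw [← hFf]
  exact ((WeakDual.eval_continuous f).tendsto F).comp hF

end IsReflexiveSpace

/-! ### Hilbert sums -/

/-- The `ℓ²`-sum of a family of normed spaces. -/
abbrev HilbertSum {ι : Type*} (Y : ι → Type*) [∀ i, NormedAddCommGroup (Y i)] : Type _ := lp Y 2

theorem le_sq_of_le_mul_of_sq_le {S C a : ℝ} (h : S ≤ C * a) (ha : a ^ 2 ≤ S) :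
    S ≤ C ^ 2 := by
  nlinarith [sq_nonneg (C - a)]

namespace HilbertSum

variable {ι : Type*} {Y : ι → Type*} [∀ i, NormedAddCommGroup (Y i)]

theorem hasSum_norm_sq (y : HilbertSum Y) : HasSum (fun i => ‖y i‖ ^ 2) (‖y‖ ^ 2) := by
  simpa using lp.hasSum_norm (p := 2) (by norm_num) y

theorem norm_apply_le (y : HilbertSum Y) (i : ι) : ‖y i‖ ≤ ‖y‖ :=
  lp.norm_apply_le_norm two_ne_zero y i

theorem norm_sum_single_sq [DecidableEq ι] (f : ∀ i, Y i) (s : Finset ι) :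
    ‖∑ i ∈ s, lp.single 2 i (f i)‖ ^ 2 = ∑ i ∈ s, ‖f i‖ ^ 2 := by
  simpa using lp.norm_sum_single (p := 2) (by norm_num) f s

theorem norm_sub_sum_single_sq [DecidableEq ι] (y : HilbertSum Y) (s : Finset ι) :
    ‖y - ∑ i ∈ s, lp.single 2 i (y i)‖ ^ 2 = ‖y‖ ^ 2 - ∑ i ∈ s, ‖y i‖ ^ 2 := by
  simpa using lp.norm_compl_sum_single (p := 2) (by norm_num) y s

theorem norm_sub_sq_le_sub_sum (x y : HilbertSum Y) (s : Finset ι) :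
    ‖x - y‖ ^ 2 ≤ 2 * ‖x‖ ^ 2 + 2 * ‖y‖ ^ 2 -
      ∑ i ∈ s, (2 * ‖x i‖ ^ 2 + 2 * ‖y i‖ ^ 2 - ‖(x - y) i‖ ^ 2) := by
  have hsum := (((hasSum_norm_sq x).mul_left 2).add ((hasSum_norm_sq y).mul_left 2)).sub
    (hasSum_norm_sq (x - y))
  have hnonneg : ∀ i, 0 ≤ 2 * ‖x i‖ ^ 2 + 2 * ‖y i‖ ^ 2 - ‖(x - y) i‖ ^ 2 := fun i => by
    have hsub : ‖(x - y) i‖ ^ 2 ≤ (‖x i‖ + ‖y i‖) ^ 2 := by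
      gcongr
      exact norm_sub_le (x i) (y i)
    linarith [add_sq_le (a := ‖x i‖) (b := ‖y i‖)]
  linarith [sum_le_hasSum s (fun i _ => hnonneg i) hsum]

/-- The Radon–Riesz property, by Fatou's lemma for
`∑' i, (2 * ‖u n i‖ ^ 2 + 2 * ‖y i‖ ^ 2 - ‖(u n - y) i‖ ^ 2)`. -/
theorem tendsto_of_tendsto_norm {u : ℕ → HilbertSum Y} {y : HilbertSum Y}
    (hu : ∀ i, Tendsto (fun n => u n i) atTop (𝓝 (y i)))
    (hnorm : Tendsto (fun n => ‖u n‖) atTop (𝓝 ‖y‖)) : Tendsto u atTop (𝓝 y) := by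
  have hcoord : ∀ i, Tendsto (fun n => ‖(u n - y) i‖ ^ 2) atTop (𝓝 0) := fun i => by
    simpa using (tendsto_iff_norm_sub_tendsto_zero.1 (hu i)).pow 2
  have hlim : ∀ s : Finset ι, Tendsto (fun n => 2 * ‖u n‖ ^ 2 + 2 * ‖y‖ ^ 2 -
      ∑ i ∈ s, (2 * ‖u n i‖ ^ 2 + 2 * ‖y i‖ ^ 2 - ‖(u n - y) i‖ ^ 2)) atTop
      (𝓝 (2 * ‖y‖ ^ 2 + 2 * ‖y‖ ^ 2 - ∑ i ∈ s, (2 * ‖y i‖ ^ 2 + 2 * ‖y i‖ ^ 2 - 0))) := fun s =>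
    (((hnorm.pow 2).const_mul 2).add_const _).sub <| tendsto_finsetSum s fun i _ =>
      ((((hu i).norm.pow 2).const_mul 2).add_const _).sub (hcoord i)
  have hzero : Tendsto (fun s : Finset ι => 2 * ‖y‖ ^ 2 + 2 * ‖y‖ ^ 2 -
      ∑ i ∈ s, (2 * ‖y i‖ ^ 2 + 2 * ‖y i‖ ^ 2 - 0)) atTop (𝓝 0) := by
    have hy := (hasSum_norm_sq y).mul_left 2
    have hzero := Tendsto.const_sub (2 * ‖y‖ ^ 2 + 2 * ‖y‖ ^ 2) (hy.add hy)
    rw [sub_self] at hzero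
    simpa only [sub_zero, SummationFilter.unconditional_filter] using hzero
  have hsq : Tendsto (fun n => ‖u n - y‖ ^ 2) atTop (𝓝 0) := by
    refine tendsto_order.2 ⟨fun a ha => .of_forall fun n => ha.trans_le (sq_nonneg _),
      fun ε hε => ?_⟩
    obtain ⟨s, hs⟩ := (hzero.eventually (gt_mem_nhds hε)).exists
    filter_upwards [(hlim s).eventually (gt_mem_nhds hs)] with n hn
      using (norm_sub_sq_le_sub_sum _ y s).trans_lt hn
  rw [tendsto_iff_norm_sub_tendsto_zero]
  simpa using hsq.sqrt

variable [∀ i, NormedSpace ℝ (Y i)]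

theorem norm_sum_comp_evalCLM_sq_le (s : Finset ι) (g : ∀ i, StrongDual ℝ (Y i)) :
    ‖∑ i ∈ s, (g i).comp (lp.evalCLM ℝ Y 2 i)‖ ^ 2 ≤ ∑ i ∈ s, ‖g i‖ ^ 2 := by
  refine (Real.le_sqrt (norm_nonneg _) (by positivity)).1 ?_
  refine ContinuousLinearMap.opNorm_le_bound _ (Real.sqrt_nonneg _) fun v => ?_
  calc ‖(∑ i ∈ s, (g i).comp (lp.evalCLM ℝ Y 2 i)) v‖ ≤ ∑ i ∈ s, ‖g i‖ * ‖v i‖ := by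
        rw [sum_apply]
        exact norm_sum_le_of_le s fun i _ => (g i).le_opNorm (v i)
    _ ≤ √(∑ i ∈ s, ‖g i‖ ^ 2) * √(∑ i ∈ s, ‖v i‖ ^ 2) := Real.sum_mul_le_sqrt_mul_sqrt _ _ _
    _ ≤ √(∑ i ∈ s, ‖g i‖ ^ 2) * ‖v‖ := by
        gcongr
        exact Real.sqrt_le_iff.2 ⟨norm_nonneg v,
          sum_le_hasSum s (fun i _ => sq_nonneg ‖v i‖) (hasSum_norm_sq v)⟩

theorem sum_norm_sq_le_of_forall_apply_eq {F : StrongDual ℝ (StrongDual ℝ (HilbertSum Y))}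
    {y : ∀ i, Y i} (hy : ∀ i (g : StrongDual ℝ (Y i)), F (g.comp (lp.evalCLM ℝ Y 2 i)) = g (y i))
    (s : Finset ι) : ∑ i ∈ s, ‖y i‖ ^ 2 ≤ ‖F‖ ^ 2 := by
  choose g hg hgy using fun i => exists_dual_vector'' ℝ (y i)
  let f : StrongDual ℝ (HilbertSum Y) := ∑ i ∈ s, (‖y i‖ • g i).comp (lp.evalCLM ℝ Y 2 i)
  have hFf : F f = ∑ i ∈ s, ‖y i‖ ^ 2 := by
    simp [f, map_sum, hy, hgy, sq]
  refine le_sq_of_le_mul_of_sq_le (a := ‖f‖) ?_ ?_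
  · exact hFf ▸ (le_abs_self _).trans (F.le_opNorm f)
  · refine (norm_sum_comp_evalCLM_sq_le s _).trans (Finset.sum_le_sum fun i _ => ?_)
    rw [norm_smul, norm_norm]
    gcongr
    exact mul_le_of_le_one_right (norm_nonneg _) (hg i)

theorem hasSum_single [DecidableEq ι] (y : HilbertSum Y) :
    HasSum (fun i => lp.singleContinuousLinearMap ℝ Y 2 i (y i)) y :=
  lp.hasSum_single (p := 2) (by norm_num) y

theorem separableSpace [Countable ι] [∀ i, TopologicalSpace.SeparableSpace (Y i)] :
    TopologicalSpace.SeparableSpace (HilbertSum Y) := by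
  classical
  have hspan := ((TopologicalSpace.IsSeparable.iUnion fun i =>
    TopologicalSpace.isSeparable_range
      (lp.singleContinuousLinearMap ℝ Y 2 i).continuous).span (R := ℝ)).closure
  rw [← TopologicalSpace.isSeparable_univ_iff]
  refine hspan.mono fun y _ => mem_closure_of_tendsto (hasSum_single y) <|
    Eventually.of_forall fun s => Submodule.sum_mem _ fun i _ =>
      Submodule.subset_span (mem_iUnion.2 ⟨i, mem_range_self _⟩)

theorem sum_norm_comp_single_sq_le [DecidableEq ι] (hY : ∀ i, IsReflexiveSpace (Y i))
    (f : StrongDual ℝ (HilbertSum Y)) (s : Finset ι) :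
    ∑ i ∈ s, ‖f.comp (lp.singleContinuousLinearMap ℝ Y 2 i)‖ ^ 2 ≤ ‖f‖ ^ 2 := by
  set g := fun i => f.comp (lp.singleContinuousLinearMap ℝ Y 2 i)
  choose y hy hgy using fun i => (hY i).exists_norm_le_one_apply_eq_norm (g i)
  let v : HilbertSum Y := ∑ i ∈ s, lp.single 2 i (‖g i‖ • y i)
  have hfv : f v = ∑ i ∈ s, ‖g i‖ ^ 2 := by
    rw [map_sum]
    refine Finset.sum_congr rfl fun i _ => ?_
    calc f (lp.single 2 i (‖g i‖ • y i)) = g i (‖g i‖ • y i) := rfl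
      _ = ‖g i‖ ^ 2 := by rw [map_smul, hgy, smul_eq_mul, sq]
  refine le_sq_of_le_mul_of_sq_le (a := ‖v‖) ?_ ?_
  · exact hfv ▸ (le_abs_self _).trans (f.le_opNorm v)
  · rw [norm_sum_single_sq]
    refine Finset.sum_le_sum fun i _ => ?_
    rw [norm_smul, norm_norm]
    gcongr
    exact mul_le_of_le_one_right (norm_nonneg _) (hy i)

theorem hasSum_comp_single_comp_evalCLM [DecidableEq ι]
    (hY : ∀ i, IsReflexiveSpace (Y i)) (f : StrongDual ℝ (HilbertSum Y)) :
    HasSum (fun i => (f.comp (lp.singleContinuousLinearMap ℝ Y 2 i)).comp (lp.evalCLM ℝ Y 2 i))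
      f := by
  set g := fun i => f.comp (lp.singleContinuousLinearMap ℝ Y 2 i)
  have hsummable : Summable fun i => ‖g i‖ ^ 2 :=
    summable_of_sum_le (fun i => sq_nonneg _) (sum_norm_comp_single_sq_le hY f)
  have hg : Summable fun i => (g i).comp (lp.evalCLM ℝ Y 2 i) := by
    refine summable_iff_vanishing_norm.2 fun ε hε => ?_
    obtain ⟨s, hs⟩ := summable_iff_vanishing_norm.1 hsummable (ε ^ 2) (by positivity)
    refine ⟨s, fun t ht => lt_of_pow_lt_pow_left₀ 2 hε.le ?_⟩
    exact (norm_sum_comp_evalCLM_sq_le t g).trans_lt ((le_abs_self _).trans_lt (hs t ht))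
  obtain ⟨f', hf'⟩ := hg
  convert hf'
  ext v
  exact ((hasSum_single v).mapL f).unique
    (hf'.mapL (ContinuousLinearMap.apply ℝ ℝ v))

theorem isReflexiveSpace (hY : ∀ i, IsReflexiveSpace (Y i)) :
    IsReflexiveSpace (HilbertSum Y) := by
  classical
  rw [IsReflexiveSpace.iff_exists_forall_apply_eq]
  intro F
  choose y hy using fun i => IsReflexiveSpace.iff_exists_forall_apply_eq.1 (hY i)
    (F.comp (ContinuousLinearMap.precomp ℝ (lp.evalCLM ℝ Y 2 i)))
  have hmem : Memℓp y 2 := memℓp_gen' (C := ‖F‖ ^ 2) fun s => by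
    simpa using sum_norm_sq_le_of_forall_apply_eq hy s
  refine ⟨⟨y, hmem⟩, fun f => ?_⟩
  refine ((hasSum_comp_single_comp_evalCLM hY f).mapL F).unique ?_
  convert (hasSum_single (⟨y, hmem⟩ : HilbertSum Y)).mapL f using 2 with i
  exact hy i _

end HilbertSum

/-! ### Convex functions and their differentiability -/

section Convex

open Asymptotics

variable {Y : Type*} {Y' : Type*} [NormedAddCommGroup Y] [NormedSpace ℝ Y]
  [NormedAddCommGroup Y'] [NormedSpace ℝ Y']

/-- Twice the gap in midpoint convexity. At the pair `x + h`, `x - h` it is the symmetric second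
difference of `G` at `x`, which measures smoothness; at general pairs it measures rotundity. -/
noncomputable def midpointDefect (G : Y → ℝ) (x y : Y) : ℝ := G x + G y - 2 * G (midpoint ℝ x y)

theorem midpointDefect_add_sub (G : Y → ℝ) (x h : Y) :
    midpointDefect G (x + h) (x - h) = G (x + h) + G (x - h) - 2 * G x := by
  rw [midpointDefect, midpoint_add_sub]

theorem midpointDefect_comp (G : Y → ℝ) (T : Y' →ₗ[ℝ] Y) (x y : Y') :
    midpointDefect (fun z => G (T z)) x y = midpointDefect G (T x) (T y) := by
  simp only [midpointDefect, midpoint_eq_smul_add, map_smul, map_add]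

theorem midpointDefect_add (G G' : Y → ℝ) (x y : Y) :
    midpointDefect (fun z => G z + G' z) x y = midpointDefect G x y + midpointDefect G' x y := by
  simp only [midpointDefect]
  ring

theorem midpointDefect_const_mul (c : ℝ) (G : Y → ℝ) (x y : Y) :
    midpointDefect (fun z => c * G z) x y = c * midpointDefect G x y := by
  simp only [midpointDefect]
  ring

theorem midpointDefect_nonneg {G : Y → ℝ} (hG : ConvexOn ℝ univ G) (x y : Y) :
    0 ≤ midpointDefect G x y := by
  have h := hG.2 (mem_univ x) (mem_univ y) (one_half_pos (α := ℝ)).le (one_half_pos (α := ℝ)).le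
    (add_halves 1)
  have hmid : midpoint ℝ x y = (1 / 2 : ℝ) • x + (1 / 2 : ℝ) • y := by
    rw [midpoint_eq_smul_add, smul_add, invOf_eq_inv, one_div]
  rw [midpointDefect, hmid]
  simp only [smul_eq_mul] at h
  linarith

theorem convexOn_norm_sq : ConvexOn ℝ univ fun x : Y => ‖x‖ ^ 2 :=
  convexOn_univ_norm.pow (fun _ _ => norm_nonneg _) 2

theorem convexOn_sum {ι : Type*} {G : ι → Y → ℝ} (A : Finset ι)
    (hG : ∀ i ∈ A, ConvexOn ℝ univ (G i)) : ConvexOn ℝ univ fun x => ∑ i ∈ A, G i x := by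
  induction A using Finset.cons_induction with
  | empty => simpa using convexOn_const 0 convex_univ
  | cons i A hi ih =>
    simp only [Finset.sum_cons, Finset.forall_mem_cons] at hG ⊢
    exact hG.1.add (ih hG.2)

theorem exists_subgradient {G : Y → ℝ} (hG : ConvexOn ℝ univ G) (hc : Continuous G) (x : Y) :
    ∃ D : StrongDual ℝ Y, ∀ y, G x + D (y - x) ≤ G y := by
  have hconv : Convex ℝ {p : Y × ℝ | G p.1 < p.2} := by simpa using hG.convex_strict_epigraph
  have hopen : IsOpen {p : Y × ℝ | G p.1 < p.2} :=
    isOpen_lt (hc.comp continuous_fst) continuous_snd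
  obtain ⟨f, hf⟩ := geometric_hahn_banach_open_point hconv hopen
    (show (x, G x) ∉ {p : Y × ℝ | G p.1 < p.2} by simp)
  let g : StrongDual ℝ Y := f.comp (.inl ℝ Y ℝ)
  set s := f (0, 1)
  have hdecomp : ∀ y t, f (y, t) = g y + t * s := fun y t => by
    rw [← smul_eq_mul, ← map_smul]
    simp [g, ← map_add]
  have hsep : ∀ y t, G y < t → g y + t * s < g x + G x * s := fun y t hyt => by
    simpa only [hdecomp] using hf (y, t) hyt
  have hs : s < 0 := by linarith [hsep x (G x + 1) (lt_add_one _)]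
  have hclosed : ∀ y, g y + G y * s ≤ g x + G x * s := fun y => by
    refine le_of_forall_pos_le_add fun ε hε => ?_
    have := hsep y (G y + ε / -s) (lt_add_of_pos_right _ (div_pos hε (neg_pos.2 hs)))
    have hεs : ε / -s * s = -ε := by rw [div_neg, neg_mul, div_mul_cancel₀ _ hs.ne]
    linarith [add_mul (G y) (ε / -s) s]
  refine ⟨(-s⁻¹) • g, fun y => ?_⟩
  have hy : (g x - g y) / s ≤ G y - G x := by
    rw [div_le_iff_of_neg hs]
    linarith [hclosed y]
  have hD : ((-s⁻¹) • g) (y - x) = (g x - g y) / s := by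
    rw [smul_apply, map_sub, smul_eq_mul]
    ring
  linarith

theorem hasFDerivAt_of_subgradient {G : Y → ℝ} {x : Y} {D : StrongDual ℝ Y}
    (hD : ∀ y, G x + D (y - x) ≤ G y)
    (ho : (fun h => midpointDefect G (x + h) (x - h)) =o[𝓝 0] fun h => h) :
    HasFDerivAt G D x := by
  rw [hasFDerivAt_iff_isLittleO_nhds_zero]
  refine (IsBigO.of_norm_le fun h => ?_).trans_isLittleO ho
  have hpos : 0 ≤ G (x + h) - G x - D h := by
    have := hD (x + h)
    rw [add_sub_cancel_left] at this
    linarith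
  have hneg : 0 ≤ G (x - h) - G x + D h := by
    have := hD (x - h)
    rw [sub_sub_cancel_left, map_neg] at this
    linarith
  rw [Real.norm_of_nonneg hpos, midpointDefect_add_sub]
  linarith

theorem isLittleO_midpointDefect {G : Y → ℝ} {x : Y} (hG : DifferentiableAt ℝ G x) :
    (fun h => midpointDefect G (x + h) (x - h)) =o[𝓝 0] fun h => h := by
  have hpos := hasFDerivAt_iff_isLittleO_nhds_zero.1 hG.hasFDerivAt
  have hneg := hpos.comp_tendsto ((continuous_neg (G := Y)).tendsto' 0 0 neg_zero)
  refine (hpos.add (isLittleO_neg_right.1 hneg)).congr_left fun h => ?_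
  simp only [midpointDefect_add_sub, Function.comp_apply, map_neg, ← sub_eq_add_neg]
  ring

theorem differentiableAt_of_isLittleO_midpointDefect {G : Y → ℝ} {x : Y}
    (hG : ConvexOn ℝ univ G) (hc : Continuous G)
    (ho : (fun h => midpointDefect G (x + h) (x - h)) =o[𝓝 0] fun h => h) :
    DifferentiableAt ℝ G x :=
  let ⟨_, hD⟩ := exists_subgradient hG hc x
  (hasFDerivAt_of_subgradient hD ho).differentiableAt

theorem differentiableAt_of_eventually_le {G g : Y → ℝ} {x : Y} (hG : ConvexOn ℝ univ G)
    (hc : Continuous G) (hg : DifferentiableAt ℝ g x) (hle : ∀ᶠ y in 𝓝 x, G y ≤ g y)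
    (heq : G x = g x) : DifferentiableAt ℝ G x := by
  refine differentiableAt_of_isLittleO_midpointDefect hG hc <|
    (IsBigO.of_bound 1 ?_).trans_isLittleO (isLittleO_midpointDefect hg)
  have hadd : Tendsto (fun h => x + h) (𝓝 0) (𝓝 x) :=
    (continuous_const_add x).tendsto' 0 x (add_zero x)
  have hsub : Tendsto (fun h => x - h) (𝓝 0) (𝓝 x) :=
    (continuous_sub_left x).tendsto' 0 x (sub_zero x)
  filter_upwards [hadd.eventually hle, hsub.eventually hle] with h hpos hneg
  rw [one_mul, Real.norm_of_nonneg (midpointDefect_nonneg hG _ _)]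
  refine le_trans ?_ (le_abs_self _)
  rw [midpointDefect_add_sub, midpointDefect_add_sub, heq]
  gcongr

theorem IsReflexiveSpace.exists_forall_le (hY : IsReflexiveSpace Y) {G : Y → ℝ}
    (hG : ConvexOn ℝ univ G) (hc : Continuous G) (hbdd : BddBelow (range G))
    (hcoercive : ∀ r, Bornology.IsBounded {y | G y ≤ r}) : ∃ m, ∀ y, G m ≤ G y := by
  have hI : ∀ y, ⨅ z, G z ≤ G y := ciInf_le hbdd
  choose u hu using fun n : ℕ =>
    exists_lt_of_ciInf_lt (lt_add_of_pos_right (⨅ z, G z) (Nat.one_div_pos_of_nat (n := n)))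
  obtain ⟨R, hR⟩ := (hcoercive ((⨅ z, G z) + 1)).exists_norm_le
  have hbound : ∀ n, ‖u n‖ ≤ R := fun n => hR _ <| (hu n).le.trans <| by
    gcongr
    exact Nat.one_div_le_one_div n.zero_le |>.trans_eq (by simp)
  obtain ⟨m, hm⟩ := hY.exists_weak_limit (hyperfilter ℕ) hbound
  obtain ⟨D, hD⟩ := exists_subgradient hG hc m
  have hlower : Tendsto (fun n => G m + (D (u n) - D m)) (hyperfilter ℕ)
      (𝓝 (G m + (D m - D m))) := ((hm D).sub_const _).const_add _
  have hupper : Tendsto (fun n : ℕ => (⨅ z, G z) + 1 / ((n : ℝ) + 1)) (hyperfilter ℕ)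
      (𝓝 ((⨅ z, G z) + 0)) :=
    (tendsto_one_div_add_atTop_nhds_zero_nat.const_add _).mono_left Nat.hyperfilter_le_atTop
  have hle := le_of_tendsto_of_tendsto' hlower hupper fun n => by
    rw [← map_sub]
    exact (hD (u n)).trans (hu n).le
  exact ⟨m, fun y => by linarith [hI y]⟩

end Convex

/-! ### Smooth and rotund functions of quadratic growth -/

open scoped NNReal

section Quadratic

open Asymptotics

variable {Y : Type*} {Y' : Type*} [NormedAddCommGroup Y] [NormedSpace ℝ Y]
  [NormedAddCommGroup Y'] [NormedSpace ℝ Y']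

/-- Even convex functions between `0` and `C ‖·‖ ^ 2`: the substitutes for the square of an
equivalent norm. -/
structure QuadraticallyBounded (G : Y → ℝ) (C : ℝ≥0) : Prop where
  convexOn : ConvexOn ℝ univ G
  map_neg : ∀ x, G (-x) = G x
  nonneg : ∀ x, 0 ≤ G x
  le : ∀ x, G x ≤ C * ‖x‖ ^ 2

theorem quadraticallyBounded_norm_sq : QuadraticallyBounded (fun x : Y => ‖x‖ ^ 2) 1 where
  convexOn := convexOn_norm_sq
  map_neg x := by rw [norm_neg]
  nonneg x := sq_nonneg _
  le x := by rw [NNReal.coe_one, one_mul]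

namespace QuadraticallyBounded

variable {G G' : Y → ℝ} {C C' : ℝ≥0}

theorem map_zero (h : QuadraticallyBounded G C) : G 0 = 0 :=
  le_antisymm (by simpa using h.le 0) (h.nonneg 0)

theorem mono (h : QuadraticallyBounded G C) (hC : C ≤ C') : QuadraticallyBounded G C' where
  convexOn := h.convexOn
  map_neg := h.map_neg
  nonneg := h.nonneg
  le x := (h.le x).trans (by gcongr)

theorem add (h : QuadraticallyBounded G C) (h' : QuadraticallyBounded G' C') :
    QuadraticallyBounded (fun x => G x + G' x) (C + C') where
  convexOn := h.convexOn.add h'.convexOn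
  map_neg x := by rw [h.map_neg, h'.map_neg]
  nonneg x := add_nonneg (h.nonneg x) (h'.nonneg x)
  le x := by
    rw [NNReal.coe_add, add_mul]
    exact add_le_add (h.le x) (h'.le x)

theorem const_mul (h : QuadraticallyBounded G C) (c : ℝ≥0) :
    QuadraticallyBounded (fun x => c * G x) (c * C) where
  convexOn := h.convexOn.smul c.2
  map_neg x := by rw [h.map_neg]
  nonneg x := mul_nonneg c.2 (h.nonneg x)
  le x := by
    rw [NNReal.coe_mul, mul_assoc]
    gcongr
    exact h.le x

theorem comp (h : QuadraticallyBounded G C) (T : Y' →L[ℝ] Y) :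
    QuadraticallyBounded (fun x => G (T x)) (C * ‖T‖₊ ^ 2) where
  convexOn := h.convexOn.comp_linearMap (T : Y' →ₗ[ℝ] Y)
  map_neg x := by rw [T.map_neg, h.map_neg]
  nonneg x := h.nonneg _
  le x := calc
    G (T x) ≤ C * ‖T x‖ ^ 2 := h.le _
    _ ≤ C * (‖T‖ * ‖x‖) ^ 2 := by gcongr; exact T.le_opNorm x
    _ = _ := by push_cast; ring

theorem continuous (h : QuadraticallyBounded G C) : Continuous G := by
  have htfae := (h.convexOn.continuousOn_tfae isOpen_univ univ_nonempty).out 1 3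
  rw [← continuousOn_univ, htfae]
  refine ⟨0, mem_univ _, C, ?_⟩
  rw [eventually_map]
  filter_upwards [Metric.closedBall_mem_nhds (0 : Y) one_pos] with x hx
  exact (h.le x).trans <| mul_le_of_le_one_right C.2 <|
    pow_le_one₀ (norm_nonneg x) (mem_closedBall_zero_iff.1 hx)

theorem midpointDefect_add_sub_le (h : QuadraticallyBounded G C) (x y : Y) :
    midpointDefect G (x + y) (x - y) ≤ 8 * C * (‖x‖ + ‖y‖) * ‖y‖ := by
  rcases eq_or_ne y 0 with rfl | hy
  · simp [midpointDefect, two_mul]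
  set r := ‖x‖ + ‖y‖
  have hy' : 0 < ‖y‖ := norm_pos_iff.2 hy
  have hr : 0 < r := by positivity
  set t := ‖y‖ / r
  have ht0 : 0 < t := by positivity
  have ht1 : t ≤ 1 := div_le_one_of_le₀ (by simp [r]) hr.le
  have hstep : ∀ z : Y, ‖z‖ = ‖y‖ → G (x + z) ≤ (1 - t) * G x + t * (C * (2 * r) ^ 2) := by
    intro z hz
    have hcombo : x + z = (1 - t) • x + t • (x + t⁻¹ • z) := by
      rw [smul_add, smul_inv_smul₀ ht0.ne', ← add_assoc, ← add_smul, sub_add_cancel, one_smul]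
    have hnorm : ‖x + t⁻¹ • z‖ ≤ 2 * r := calc
      ‖x + t⁻¹ • z‖ ≤ ‖x‖ + t⁻¹ * ‖y‖ := by
        refine (norm_add_le _ _).trans_eq ?_
        rw [norm_smul, Real.norm_of_nonneg (inv_nonneg.2 ht0.le), hz]
      _ = ‖x‖ + r := by rw [inv_div, div_mul_cancel₀ _ hy'.ne']
      _ ≤ 2 * r := by linarith
    have hG := (h.le (x + t⁻¹ • z)).trans (b := _) (c := C * (2 * r) ^ 2) (by gcongr)
    rw [hcombo]
    refine (h.convexOn.2 (mem_univ _) (mem_univ _) (sub_nonneg.2 ht1) ht0.le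
      (sub_add_cancel 1 t)).trans ?_
    simp only [smul_eq_mul]
    gcongr
  have hpos := hstep y rfl
  have hneg := hstep (-y) (norm_neg y)
  rw [midpointDefect_add_sub, sub_eq_add_neg x y]
  have hconst : t * (C * (2 * r) ^ 2) = 4 * C * r * ‖y‖ := by
    simp only [t]
    field_simp
    ring
  nlinarith [h.nonneg x]

end QuadraticallyBounded

/-- The smoothness property propagated by the construction: a Fréchet differentiable substitute
for the square of an equivalent norm. -/
def HasSmoothQuadratic (Y : Type*) [NormedAddCommGroup Y] [NormedSpace ℝ Y] : Prop :=
  ∃ (S : Y → ℝ) (c : ℝ) (C : ℝ≥0), 0 < c ∧ QuadraticallyBounded S C ∧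
    (∀ x, c * ‖x‖ ^ 2 ≤ S x) ∧ Differentiable ℝ S

namespace HasSmoothQuadratic

theorem of_innerProductSpace {F : Type*} [NormedAddCommGroup F] [InnerProductSpace ℝ F] :
    HasSmoothQuadratic F :=
  ⟨fun x => ‖x‖ ^ 2, 1, 1, one_pos, quadraticallyBounded_norm_sq, fun _ => (one_mul _).le,
    differentiable_id.norm_sq ℝ⟩

theorem congr (h : HasSmoothQuadratic Y) (e : Y ≃L[ℝ] Y') : HasSmoothQuadratic Y' := by
  obtain ⟨S, c, C, hc, hS, hlower, hdiff⟩ := h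
  let K := ‖(e : Y →L[ℝ] Y')‖ + 1
  refine ⟨fun y => S (e.symm y), c / K ^ 2, _, by positivity,
    hS.comp (e.symm : Y' →L[ℝ] Y), fun y => ?_, hdiff.comp e.symm.differentiable⟩
  have hy : ‖y‖ ≤ K * ‖e.symm y‖ := calc
    ‖y‖ = ‖(e : Y →L[ℝ] Y') (e.symm y)‖ := by simp
    _ ≤ _ := (e : Y →L[ℝ] Y').le_of_opNorm_le (lt_add_one _).le _
  refine le_trans ?_ (hlower _)
  rw [div_mul_eq_mul_div, div_le_iff₀ (by positivity)]
  calc c * ‖y‖ ^ 2 ≤ c * (K * ‖e.symm y‖) ^ 2 := by gcongr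
    _ = _ := by ring

theorem of_finiteDimensional [FiniteDimensional ℝ Y] : HasSmoothQuadratic Y :=
  of_innerProductSpace.congr toEuclidean.symm

theorem prod (h : HasSmoothQuadratic Y) (h' : HasSmoothQuadratic Y') :
    HasSmoothQuadratic (Y × Y') := by
  obtain ⟨S, c, C, hc, hS, hlower, hdiff⟩ := h
  obtain ⟨S', c', C', hc', hS', hlower', hdiff'⟩ := h'
  refine ⟨fun p => S p.1 + S' p.2, min c c', _, lt_min hc hc',
    (hS.comp (.fst ℝ Y Y')).add (hS'.comp (.snd ℝ Y Y')), fun p => ?_,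
    (hdiff.comp differentiable_fst).add (hdiff'.comp differentiable_snd)⟩
  rcases max_choice ‖p.1‖ ‖p.2‖ with hp | hp <;> rw [Prod.norm_def, hp]
  · calc min c c' * ‖p.1‖ ^ 2 ≤ c * ‖p.1‖ ^ 2 := by gcongr; exact min_le_left _ _
      _ ≤ S p.1 + S' p.2 := by linarith [hlower p.1, hS'.nonneg p.2]
  · calc min c c' * ‖p.2‖ ^ 2 ≤ c' * ‖p.2‖ ^ 2 := by gcongr; exact min_le_right _ _
      _ ≤ S p.1 + S' p.2 := by linarith [hlower' p.2, hS.nonneg p.1]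

end HasSmoothQuadratic

/-- Convergence to `x` is forced by vanishing of the midpoint defect at `x`. For the square of a
norm this is local uniform rotundity. -/
def LocallyUniformlyRotund (Λ : Y → ℝ) : Prop :=
  ∀ (x : Y) (u : ℕ → Y), Tendsto (fun n => midpointDefect Λ (u n) x) atTop (𝓝 0) →
    Tendsto u atTop (𝓝 x)

/-- The rotundity property propagated by the construction: a locally uniformly rotund substitute for
the square of a norm. -/
def HasRotundQuadratic (Y : Type*) [NormedAddCommGroup Y] [NormedSpace ℝ Y] : Prop :=
  ∃ (Λ : Y → ℝ) (C : ℝ≥0), QuadraticallyBounded Λ C ∧ LocallyUniformlyRotund Λ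

namespace HasRotundQuadratic

theorem of_innerProductSpace {F : Type*} [NormedAddCommGroup F] [InnerProductSpace ℝ F] :
    HasRotundQuadratic F := by
  refine ⟨fun x => ‖x‖ ^ 2, 1, quadraticallyBounded_norm_sq, fun x u hu => ?_⟩
  have hsq : ∀ y, ‖y - x‖ ^ 2 = 2 * midpointDefect (fun z : F => ‖z‖ ^ 2) y x := fun y => by
    have hparallelogram := parallelogram_law_with_norm ℝ y x
    rw [midpointDefect, midpoint_eq_smul_add, norm_smul]
    norm_num
    linarith
  rw [tendsto_iff_norm_sub_tendsto_zero]
  simpa [← hsq] using (hu.const_mul 2).sqrt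

theorem congr (h : HasRotundQuadratic Y) (e : Y ≃L[ℝ] Y') : HasRotundQuadratic Y' := by
  obtain ⟨Λ, C, hΛ, hrot⟩ := h
  refine ⟨fun y => Λ (e.symm y), _, hΛ.comp (e.symm : Y' →L[ℝ] Y), fun x u hu => ?_⟩
  have := hrot (e.symm x) (fun n => e.symm (u n)) <| hu.congr fun n =>
    midpointDefect_comp Λ (e.symm : Y' →ₗ[ℝ] Y) (u n) x
  simpa [Function.comp_def] using (e.continuous.tendsto _).comp this

theorem of_finiteDimensional [FiniteDimensional ℝ Y] : HasRotundQuadratic Y :=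
  of_innerProductSpace.congr toEuclidean.symm

theorem prod (h : HasRotundQuadratic Y) (h' : HasRotundQuadratic Y') :
    HasRotundQuadratic (Y × Y') := by
  obtain ⟨Λ, C, hΛ, hrot⟩ := h
  obtain ⟨Λ', C', hΛ', hrot'⟩ := h'
  refine ⟨fun p => Λ p.1 + Λ' p.2, _, (hΛ.comp (.fst ℝ Y Y')).add (hΛ'.comp (.snd ℝ Y Y')),
    fun p u hu => ?_⟩
  have hsplit : ∀ n, midpointDefect (fun p : Y × Y' => Λ p.1 + Λ' p.2) (u n) p =
      midpointDefect Λ (u n).1 p.1 + midpointDefect Λ' (u n).2 p.2 := fun n => by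
    rw [midpointDefect_add]
    exact congr_arg₂ _ (midpointDefect_comp Λ (.fst ℝ Y Y') _ _)
      (midpointDefect_comp Λ' (.snd ℝ Y Y') _ _)
  simp only [hsplit] at hu
  have h1 := hrot p.1 (fun n => (u n).1) <| squeeze_zero
    (fun n => midpointDefect_nonneg hΛ.convexOn _ _)
    (fun n => le_add_of_nonneg_right (midpointDefect_nonneg hΛ'.convexOn _ _)) hu
  have h2 := hrot' p.2 (fun n => (u n).2) <| squeeze_zero
    (fun n => midpointDefect_nonneg hΛ'.convexOn _ _)
    (fun n => le_add_of_nonneg_left (midpointDefect_nonneg hΛ.convexOn _ _)) hu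
  exact h1.prodMk_nhds h2

theorem exists_quadraticallyBounded_one (h : HasRotundQuadratic Y) :
    ∃ Λ : Y → ℝ, QuadraticallyBounded Λ 1 ∧ LocallyUniformlyRotund Λ := by
  obtain ⟨Λ, C, hΛ, hrot⟩ := h
  refine ⟨fun x => (C + 1)⁻¹ * Λ x, (hΛ.const_mul (C + 1)⁻¹).mono ?_, fun x u hu => hrot x u ?_⟩
  · exact inv_mul_le_one_of_le₀ (le_add_of_nonneg_right zero_le_one) zero_le
  · have hC : (C + 1 : ℝ) ≠ 0 := by positivity
    simpa [midpointDefect_const_mul, hC] using hu.const_mul (C + 1 : ℝ)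

end HasRotundQuadratic

theorem sq_norm_sub_norm_le_midpointDefect (x y : Y) :
    (‖x‖ - ‖y‖) ^ 2 ≤ 2 * midpointDefect (fun z : Y => ‖z‖ ^ 2) x y := by
  have hmid : ‖midpoint ℝ x y‖ ≤ (‖x‖ + ‖y‖) / 2 := by
    rw [midpoint_eq_smul_add, norm_smul, invOf_eq_inv, norm_inv, Real.norm_two, inv_mul_eq_div]
    gcongr
    exact norm_add_le x y
  have hsq : ‖midpoint ℝ x y‖ ^ 2 ≤ ((‖x‖ + ‖y‖) / 2) ^ 2 := by gcongr
  rw [midpointDefect]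
  linarith

theorem tendsto_norm_of_midpointDefect {u : ℕ → Y} {x : Y}
    (hu : Tendsto (fun n => midpointDefect (fun z : Y => ‖z‖ ^ 2) (u n) x) atTop (𝓝 0)) :
    Tendsto (fun n => ‖u n‖) atTop (𝓝 ‖x‖) := by
  have hsq : Tendsto (fun n => (‖u n‖ - ‖x‖) ^ 2) atTop (𝓝 0) :=
    squeeze_zero (fun n => sq_nonneg _) (fun n => sq_norm_sub_norm_le_midpointDefect _ _)
      (by simpa using hu.const_mul 2)
  rw [tendsto_iff_norm_sub_tendsto_zero]
  simpa [Real.sqrt_sq_eq_abs] using hsq.sqrt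

section InfConvolution

variable {S : Y → ℝ} {C : ℝ≥0}

theorem QuadraticallyBounded.exists_forall_infConvolution_le (hS : QuadraticallyBounded S C)
    (hY : IsReflexiveSpace Y) (hlower : ∀ y, ‖y‖ ^ 2 ≤ S y) (x : Y) :
    ∃ m, ∀ y, ‖x - m‖ ^ 2 + S m ≤ ‖x - y‖ ^ 2 + S y := by
  have hconv : ConvexOn ℝ univ fun y => ‖x - y‖ ^ 2 := by
    simpa [Function.comp_def, sub_eq_add_neg] using
      (convexOn_norm_sq (Y := Y)).comp_affineMap
        (AffineMap.const ℝ Y x - (LinearMap.id (R := ℝ) (M := Y)).toAffineMap)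
  have hScont := hS.continuous
  refine hY.exists_forall_le (hconv.add hS.convexOn) (by fun_prop) ⟨0, ?_⟩ fun r => ?_
  · rintro _ ⟨y, rfl⟩
    exact add_nonneg (sq_nonneg _) (hS.nonneg y)
  · refine isBounded_iff_forall_norm_le.2 ⟨√r, fun y hy => Real.le_sqrt_of_sq_le ?_⟩
    exact (hlower y).trans ((le_add_of_nonneg_left (sq_nonneg _)).trans hy)

theorem QuadraticallyBounded.infConvolution (hS : QuadraticallyBounded S C) {m : Y → Y}
    (hm : ∀ x y, ‖x - m x‖ ^ 2 + S (m x) ≤ ‖x - y‖ ^ 2 + S y) :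
    QuadraticallyBounded (fun x => ‖x - m x‖ ^ 2 + S (m x)) 1 where
  convexOn := by
    refine ⟨convex_univ, fun x _ y _ a b ha hb hab => ?_⟩
    refine (hm _ (a • m x + b • m y)).trans ?_
    have hsub : a • x + b • y - (a • m x + b • m y) = a • (x - m x) + b • (y - m y) := by
      module
    rw [hsub, smul_add, smul_add, add_add_add_comm]
    exact add_le_add (convexOn_norm_sq.2 (mem_univ _) (mem_univ _) ha hb hab)
      (hS.convexOn.2 (mem_univ _) (mem_univ _) ha hb hab)
  map_neg := by
    have hle : ∀ x, ‖-x - m (-x)‖ ^ 2 + S (m (-x)) ≤ ‖x - m x‖ ^ 2 + S (m x) := fun x => by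
      have := hm (-x) (-m x)
      rwa [hS.map_neg, ← neg_sub', norm_neg] at this
    exact fun x => (hle x).antisymm (by simpa using hle (-x))
  nonneg x := add_nonneg (sq_nonneg _) (hS.nonneg _)
  le x := by simpa [hS.map_zero] using hm x 0

/-- The infimal convolution with `‖·‖ ^ 2` is touched from above at `x` by the translate
`y ↦ ‖x - m x‖ ^ 2 + S (y - x + m x)`, so it inherits the smoothness of `S`. -/
theorem QuadraticallyBounded.differentiable_infConvolution (hS : QuadraticallyBounded S C)
    {m : Y → Y} (hm : ∀ x y, ‖x - m x‖ ^ 2 + S (m x) ≤ ‖x - y‖ ^ 2 + S y)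
    (hdiff : Differentiable ℝ S) :
    Differentiable ℝ fun x => ‖x - m x‖ ^ 2 + S (m x) := fun x => by
  have hinf := hS.infConvolution hm
  refine differentiableAt_of_eventually_le (g := fun y => ‖x - m x‖ ^ 2 + S (y - x + m x))
    hinf.convexOn hinf.continuous (by fun_prop) (.of_forall fun y => ?_) (by simp)
  have hsub : y - (y - x + m x) = x - m x := by abel
  simpa only [hsub] using hm y (y - x + m x)

end InfConvolution

theorem HasSmoothQuadratic.exists_half_norm_sq_le (h : HasSmoothQuadratic Y)
    (hY : IsReflexiveSpace Y) :
    ∃ N : Y → ℝ, QuadraticallyBounded N 1 ∧ (∀ x, ‖x‖ ^ 2 / 2 ≤ N x) ∧ Differentiable ℝ N := by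
  obtain ⟨S, c, C, hc, hS, hlower, hdiff⟩ := h
  lift c to ℝ≥0 using hc.le
  have hS' := hS.const_mul c⁻¹
  have hlower' : ∀ y, ‖y‖ ^ 2 ≤ c⁻¹ * S y := fun y => by
    rw [NNReal.coe_inv, inv_mul_eq_div, le_div_iff₀' hc]
    exact hlower y
  choose m hm using hS'.exists_forall_infConvolution_le hY hlower'
  refine ⟨_, hS'.infConvolution hm, fun x => ?_,
    hS'.differentiable_infConvolution hm (hdiff.const_mul _)⟩
  have hx : ‖x‖ ≤ ‖x - m x‖ + ‖m x‖ := by simpa using norm_add_le (x - m x) (m x)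
  calc ‖x‖ ^ 2 / 2 ≤ (‖x - m x‖ + ‖m x‖) ^ 2 / 2 := by gcongr
    _ ≤ ‖x - m x‖ ^ 2 + ‖m x‖ ^ 2 := by linarith [add_sq_le (a := ‖x - m x‖) (b := ‖m x‖)]
    _ ≤ _ := by gcongr; exact hlower' _

end Quadratic

section QuadraticHilbertSum

open Asymptotics

variable {ι : Type*} {Y : ι → Type*} [∀ i, NormedAddCommGroup (Y i)] [∀ i, NormedSpace ℝ (Y i)]
  {N : ∀ i, Y i → ℝ} {C : ℝ≥0}

namespace HilbertSum

/-- The projection of a Hilbert sum that sets the coordinates in `s` to zero. -/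
noncomputable def tail [DecidableEq ι] (s : Finset ι) : HilbertSum Y →L[ℝ] HilbertSum Y :=
  .id ℝ _ - ∑ i ∈ s, (lp.singleContinuousLinearMap ℝ Y 2 i).comp (lp.evalCLM ℝ Y 2 i)

theorem tail_eq [DecidableEq ι] (s : Finset ι) (y : HilbertSum Y) :
    tail s y = y - ∑ i ∈ s, lp.single 2 i (y i) := by
  rw [tail, sub_apply, sum_apply]
  rfl

theorem tail_apply [DecidableEq ι] (s : Finset ι) (y : HilbertSum Y) (i : ι) :
    tail s y i = if i ∈ s then 0 else y i := by
  rw [tail_eq, lp.coeFn_sub, Pi.sub_apply, lp.coeFn_sum, Finset.sum_apply]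
  simp only [lp.single_apply, Finset.sum_pi_single]
  split <;> simp

theorem norm_tail_le [DecidableEq ι] (s : Finset ι) (y : HilbertSum Y) : ‖tail s y‖ ≤ ‖y‖ := by
  refine le_of_sq_le_sq ?_ (norm_nonneg y)
  rw [tail_eq]
  refine (norm_sub_sum_single_sq y s).trans_le (sub_le_self _ ?_)
  positivity

theorem tendsto_tail [DecidableEq ι] (y : HilbertSum Y) :
    Tendsto (fun s => tail s y) atTop (𝓝 0) := by
  simpa [tail_eq] using (hasSum_single y).const_sub y

/-- The function `y ↦ ∑' i, N i (y i)` on a Hilbert sum. -/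
noncomputable def sumApply (N : ∀ i, Y i → ℝ) (y : HilbertSum Y) : ℝ := ∑' i, N i (y i)

theorem hasSum_sumApply (hN : ∀ i, QuadraticallyBounded (N i) C) (y : HilbertSum Y) :
    HasSum (fun i => N i (y i)) (sumApply N y) :=
  (Summable.of_nonneg_of_le (fun i => (hN i).nonneg _) (fun i => (hN i).le _)
    ((hasSum_norm_sq y).summable.mul_left _)).hasSum

theorem quadraticallyBounded_sumApply (hN : ∀ i, QuadraticallyBounded (N i) C) :
    QuadraticallyBounded (sumApply N) C where
  convexOn := ⟨convex_univ, fun x _ y _ a b ha hb hab =>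
    hasSum_le (fun i => (hN i).convexOn.2 (mem_univ _) (mem_univ _) ha hb hab)
      (hasSum_sumApply hN _)
      (((hasSum_sumApply hN x).mul_left a).add ((hasSum_sumApply hN y).mul_left b))⟩
  map_neg _ := tsum_congr fun i => (hN i).map_neg _
  nonneg _ := tsum_nonneg fun i => (hN i).nonneg _
  le y := hasSum_le (fun i => (hN i).le _) (hasSum_sumApply hN y) ((hasSum_norm_sq y).mul_left _)

theorem sumApply_eq_sum_add_tail [DecidableEq ι] (hN : ∀ i, QuadraticallyBounded (N i) C)
    (s : Finset ι) (y : HilbertSum Y) :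
    sumApply N y = ∑ i ∈ s, N i (y i) + sumApply N (tail s y) := by
  refine (hasSum_sumApply hN y).unique ?_
  convert (hasSum_sum_of_ne_finset_zero (f := fun i => if i ∈ s then N i (y i) else 0) (s := s)
    fun i hi => if_neg hi).add (hasSum_sumApply hN (tail s y)) using 1
  · ext i
    by_cases hi : i ∈ s
    · simp [tail_apply, hi, (hN i).map_zero]
    · simp [tail_apply, hi]
  · congr 1
    exact Finset.sum_congr rfl fun i hi => (if_pos hi).symm

theorem differentiable_sumApply (hN : ∀ i, QuadraticallyBounded (N i) C)
    (hdiff : ∀ i, Differentiable ℝ (N i)) : Differentiable ℝ (sumApply N) := by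
  classical
  intro y
  have hT := quadraticallyBounded_sumApply hN
  refine differentiableAt_of_isLittleO_midpointDefect hT.convexOn hT.continuous ?_
  refine isLittleO_iff.2 fun ε hε => ?_
  have htendsto : Tendsto (fun s => 8 * C * (‖tail s y‖ + 0)) atTop (𝓝 0) := by
    simpa using (tendsto_tail y).norm.const_mul (8 * C : ℝ)
  obtain ⟨s, hs⟩ := (htendsto.eventually (gt_mem_nhds (half_pos hε))).exists
  have hhead : DifferentiableAt ℝ (fun z : HilbertSum Y => ∑ i ∈ s, N i (z i)) y :=
    .fun_sum fun i _ => (hdiff i _).comp y (lp.evalCLM ℝ Y 2 i).differentiableAt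
  have htail : ∀ᶠ h : HilbertSum Y in 𝓝 0, 8 * C * (‖tail s y‖ + ‖h‖) < ε / 2 :=
    (((continuous_norm.const_add _).const_mul _).tendsto' _ _ (by simp)).eventually
      (gt_mem_nhds hs)
  filter_upwards [isLittleO_iff.1 (isLittleO_midpointDefect hhead) (half_pos hε), htail]
    with h hhead htail
  rw [Real.norm_of_nonneg (midpointDefect_nonneg hT.convexOn _ _)]
  calc midpointDefect (sumApply N) (y + h) (y - h)
      = midpointDefect (fun z => ∑ i ∈ s, N i (z i)) (y + h) (y - h) +
          midpointDefect (sumApply N) (tail s y + tail s h) (tail s y - tail s h) := by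
        rw [← map_add, ← map_sub, ← ContinuousLinearMap.coe_coe, ← midpointDefect_comp,
          ← midpointDefect_add]
        exact congr_arg (midpointDefect · _ _) (funext (sumApply_eq_sum_add_tail hN s))
    _ ≤ ε / 2 * ‖h‖ + 8 * C * (‖tail s y‖ + ‖tail s h‖) * ‖tail s h‖ :=
        add_le_add ((le_abs_self _).trans hhead) (hT.midpointDefect_add_sub_le _ _)
    _ ≤ ε / 2 * ‖h‖ + ε / 2 * ‖h‖ := by
        gcongr
        · exact (by gcongr; exact norm_tail_le s h : _ ≤ 8 * C * (‖tail s y‖ + ‖h‖)).trans htail.le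
        · exact norm_tail_le s h
    _ = ε * ‖h‖ := by ring

theorem midpointDefect_apply_le (hN : ∀ i, QuadraticallyBounded (N i) C) (x y : HilbertSum Y)
    (i : ι) : midpointDefect (N i) (x i) (y i) ≤ midpointDefect (sumApply N) x y := by
  have hsum : HasSum (fun i => midpointDefect (N i) (x i) (y i))
      (midpointDefect (sumApply N) x y) :=
    ((hasSum_sumApply hN x).add (hasSum_sumApply hN y)).sub
      ((hasSum_sumApply hN (midpoint ℝ x y)).mul_left 2)
  exact le_hasSum hsum i fun j _ => midpointDefect_nonneg (hN j).convexOn _ _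

theorem locallyUniformlyRotund_sumApply (hN : ∀ i, QuadraticallyBounded (N i) C)
    (hrot : ∀ i, LocallyUniformlyRotund (N i)) :
    LocallyUniformlyRotund fun y : HilbertSum Y => ‖y‖ ^ 2 + sumApply N y := by
  intro y u hu
  have hT := quadraticallyBounded_sumApply hN
  simp only [midpointDefect_add] at hu
  have hsum : Tendsto (fun n => midpointDefect (sumApply N) (u n) y) atTop (𝓝 0) :=
    squeeze_zero (fun n => midpointDefect_nonneg hT.convexOn _ _)
      (fun n => le_add_of_nonneg_left (midpointDefect_nonneg convexOn_norm_sq _ _)) hu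
  have hnorm : Tendsto (fun n => midpointDefect (fun z : HilbertSum Y => ‖z‖ ^ 2) (u n) y) atTop
      (𝓝 0) :=
    squeeze_zero (fun n => midpointDefect_nonneg convexOn_norm_sq _ _)
      (fun n => le_add_of_nonneg_right (midpointDefect_nonneg hT.convexOn _ _)) hu
  refine tendsto_of_tendsto_norm (fun i => ?_) (tendsto_norm_of_midpointDefect hnorm)
  exact hrot i (y i) _ <| squeeze_zero (fun n => midpointDefect_nonneg (hN i).convexOn _ _)
    (fun n => midpointDefect_apply_le hN _ _ i) hsum

end HilbertSum

theorem HasSmoothQuadratic.hilbertSum (h : ∀ i, HasSmoothQuadratic (Y i))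
    (hY : ∀ i, IsReflexiveSpace (Y i)) : HasSmoothQuadratic (HilbertSum Y) := by
  choose N hN hlower hdiff using fun i => (h i).exists_half_norm_sq_le (hY i)
  refine ⟨HilbertSum.sumApply N, 1 / 2, 1, one_half_pos,
    HilbertSum.quadraticallyBounded_sumApply hN,
    fun y => ?_, HilbertSum.differentiable_sumApply hN hdiff⟩
  refine hasSum_le (fun i => ?_) ((HilbertSum.hasSum_norm_sq y).mul_left _)
    (HilbertSum.hasSum_sumApply hN y)
  exact (one_div_mul_eq_div _ _).trans_le (hlower i _)

theorem HasRotundQuadratic.hilbertSum (h : ∀ i, HasRotundQuadratic (Y i)) :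
    HasRotundQuadratic (HilbertSum Y) := by
  choose Λ hΛ hrot using fun i => (h i).exists_quadraticallyBounded_one
  exact ⟨_, _, quadraticallyBounded_norm_sq.add (HilbertSum.quadraticallyBounded_sumApply hΛ),
    HilbertSum.locallyUniformlyRotund_sumApply hΛ hrot⟩

end QuadraticHilbertSum

/-! ### Equivalent norms -/

/-- A seminorm equivalent to the norm of `Y`. -/
structure EquivalentNorm (Y : Type*) [NormedAddCommGroup Y] [NormedSpace ℝ Y] extends
    Seminorm ℝ Y where
  exists_le_apply : ∃ c > 0, ∀ y, c * ‖y‖ ≤ toFun y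
  exists_apply_le : ∃ C, ∀ y, toFun y ≤ C * ‖y‖

namespace EquivalentNorm

variable {Y : Type*} [NormedAddCommGroup Y] [NormedSpace ℝ Y] (p : EquivalentNorm Y)

/-- The vector space `Y` normed by `p`. -/
def Space {Y : Type*} [NormedAddCommGroup Y] [NormedSpace ℝ Y] (_p : EquivalentNorm Y) : Type _ := Y

instance : AddCommGroup p.Space := inferInstanceAs (AddCommGroup Y)

instance : Module ℝ p.Space := inferInstanceAs (Module ℝ Y)

instance : Norm p.Space := ⟨fun y => p.toSeminorm y⟩

theorem normedSpaceCore : NormedSpace.Core ℝ p.Space where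
  norm_nonneg := apply_nonneg p.toSeminorm
  norm_smul := map_smul_eq_mul p.toSeminorm
  norm_triangle := map_add_le_add p.toSeminorm
  norm_eq_zero_iff y := by
    refine ⟨fun hy => ?_, fun hy => by rw [hy]; exact map_zero p.toSeminorm⟩
    obtain ⟨c, hc, hle⟩ := p.exists_le_apply
    exact norm_le_zero_iff.1 (nonpos_of_mul_nonpos_right ((hle y).trans_eq hy) hc)

noncomputable instance : NormedAddCommGroup p.Space := .ofCore p.normedSpaceCore

noncomputable instance : NormedSpace ℝ p.Space := .ofCore p.normedSpaceCore

theorem exists_toSpace : ∃ e : Y ≃L[ℝ] p.Space, ∀ y, ‖e y‖ = p.toSeminorm y := by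
  obtain ⟨c, hc, hle⟩ := p.exists_le_apply
  obtain ⟨C, hC⟩ := p.exists_apply_le
  refine ⟨LinearEquiv.toContinuousLinearEquivOfBounds (LinearEquiv.refl ℝ Y : Y ≃ₗ[ℝ] p.Space)
    C c⁻¹ hC fun y => ?_, fun y => rfl⟩
  rw [← div_eq_inv_mul, le_div_iff₀' hc]
  exact hle y

/-- The identity of `Y`, as an isomorphism onto the renormed space. -/
noncomputable def toSpace : Y ≃L[ℝ] p.Space := p.exists_toSpace.choose

theorem norm_toSpace (y : Y) : ‖p.toSpace y‖ = p.toSeminorm y := p.exists_toSpace.choose_spec y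

instance [CompleteSpace Y] : CompleteSpace p.Space :=
  (completeSpace_congr (e := p.toSpace.toEquiv) p.toSpace.isUniformEmbedding).1 inferInstance

instance [TopologicalSpace.SeparableSpace Y] : TopologicalSpace.SeparableSpace p.Space :=
  p.toSpace.surjective.denseRange.separableSpace p.toSpace.continuous

/-- The norm `fun y ↦ ⨆ t, ‖T t y‖`. -/
noncomputable def iSup {τ : Type*} [Nonempty τ] {Z : Type*} [SeminormedAddCommGroup Z]
    [NormedSpace ℝ Z] (T : τ → Y →ₗ[ℝ] Z) (hle : ∃ c > 0, ∀ y, ∃ t, c * ‖y‖ ≤ ‖T t y‖)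
    (hT : ∃ C, ∀ y t, ‖T t y‖ ≤ C * ‖y‖) : EquivalentNorm Y :=
  have hbdd : ∀ y, BddAbove (range fun t => ‖T t y‖) := fun y =>
    ⟨hT.choose * ‖y‖, forall_mem_range.2 (hT.choose_spec y)⟩
  { toSeminorm := .ofSMulLE (fun y => ⨆ t, ‖T t y‖) (by simp)
      (fun x y => ciSup_le fun t => by
        rw [map_add]
        exact (norm_add_le _ _).trans (add_le_add (le_ciSup (hbdd x) t) (le_ciSup (hbdd y) t)))
      fun a y => ciSup_le fun t => by
        rw [map_smul, norm_smul]
        gcongr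
        exact le_ciSup (hbdd y) t
    exists_le_apply := by
      obtain ⟨c, hc, hle⟩ := hle
      refine ⟨c, hc, fun y => ?_⟩
      obtain ⟨t, ht⟩ := hle y
      exact ht.trans (le_ciSup (hbdd y) t)
    exists_apply_le := by
      obtain ⟨C, hC⟩ := hT
      exact ⟨C, fun y => ciSup_le (hC y)⟩ }

theorem norm_toSpace_iSup_le_iff {τ : Type*} [Nonempty τ] {Z : Type*} [SeminormedAddCommGroup Z]
    [NormedSpace ℝ Z] {T : τ → Y →ₗ[ℝ] Z} {hle : ∃ c > 0, ∀ y, ∃ t, c * ‖y‖ ≤ ‖T t y‖}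
    {hT : ∃ C, ∀ y t, ‖T t y‖ ≤ C * ‖y‖} {y : Y} {K : ℝ} :
    ‖(iSup T hle hT).toSpace y‖ ≤ K ↔ ∀ t, ‖T t y‖ ≤ K := by
  rw [norm_toSpace]
  exact ciSup_le_iff ⟨hT.choose * ‖y‖, forall_mem_range.2 (hT.choose_spec y)⟩

end EquivalentNorm

/-! ### Finite paths of a relation -/

/-- The finite `r`-chains starting at `q`. -/
inductive Path {Q : Type u} (r : Q → Q → Prop) : Q → Type u
  | root {q : Q} : Path r q
  | cons {q : Q} (c : {q' // r q q'}) (t : Path r c.1) : Path r q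

namespace Path

variable {Q : Type u} {r : Q → Q → Prop}

instance (q : Q) : Nonempty (Path r q) := ⟨.root⟩

/-- The last element of the chain. -/
def tip : {q : Q} → Path r q → Q
  | q, .root => q
  | _, .cons _ t => t.tip

/-- The chain `s` followed by `q'`. -/
def snoc : {q : Q} → (s : Path r q) → (q' : Q) → r s.tip q' → Path r q
  | _, .root, q', h => .cons ⟨q', h⟩ .root
  | _, .cons c t, q', h => .cons c (t.snoc q' h)

theorem tip_snoc {q : Q} (s : Path r q) (q' : Q) (h : r s.tip q') : (s.snoc q' h).tip = q' := by
  induction s with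
  | root => rfl
  | cons c t ih => exact ih h

theorem level_le_level_tip {lev : Q → ℕ} (hlev : ∀ q q', r q q' → lev q' = lev q + 1) {q : Q}
    (s : Path r q) : lev q ≤ lev s.tip := by
  induction s with
  | root => exact le_rfl
  | cons c t ih => exact ((hlev _ _ c.2).symm ▸ Nat.le_succ _ : lev _ ≤ lev c.1).trans ih

end Path

/-! ### Systems of finite-rank projections -/

/-- The increasing sequence `1/2, 3/4, 7/8, …`. -/
noncomputable def scale (n : ℕ) : ℝ := 1 - (1 / 2) ^ (n + 1)

/-- The midpoint of `scale n` and `scale (n + 1)`. -/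
noncomputable def midScale (n : ℕ) : ℝ := (scale n + scale (n + 1)) / 2

theorem scale_succ (n : ℕ) : scale (n + 1) = scale n + (1 / 2) ^ (n + 2) := by
  unfold scale
  ring

theorem strictMono_scale : StrictMono scale := strictMono_nat_of_lt_succ fun n => by
  rw [scale_succ]
  exact lt_add_of_pos_right _ (by positivity)

theorem half_le_scale (n : ℕ) : 1 / 2 ≤ scale n :=
  (by norm_num [scale] : 1 / 2 ≤ scale 0).trans (strictMono_scale.monotone n.zero_le)

theorem scale_pos (n : ℕ) : 0 < scale n := one_half_pos.trans_le (half_le_scale n)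

theorem scale_lt_one (n : ℕ) : scale n < 1 := sub_lt_self _ (by positivity)

theorem scale_lt_midScale (n : ℕ) : scale n < midScale n :=
  left_lt_add_div_two.2 (strictMono_scale n.lt_succ_self)

theorem midScale_lt_scale_succ (n : ℕ) : midScale n < scale (n + 1) :=
  add_div_two_lt_right.2 (strictMono_scale n.lt_succ_self)

/-- Commuting norm-one finite-rank projections `P n` of `E` that converge strongly to the identity,
together with finite sets of functionals norming their ranges: a monotone finite-dimensional
decomposition with polyhedral pieces. -/
structure ProjectionSystem (E : Type*) [NormedAddCommGroup E] [NormedSpace ℝ E] where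
  P : ℕ → E →L[ℝ] E
  norm_P_le : ∀ n a, ‖P n a‖ ≤ ‖a‖
  P_P_of_le : ∀ {k n}, k ≤ n → ∀ a, P k (P n a) = P k a
  P_P_of_ge : ∀ {k n}, k ≤ n → ∀ a, P n (P k a) = P k a
  finiteDimensional : ∀ n, FiniteDimensional ℝ (P n).range
  tendsto_P : ∀ a, Tendsto (fun n => P n a) atTop (𝓝 a)
  functionals : ℕ → Finset (StrongDual ℝ E)
  abs_apply_le : ∀ {n}, ∀ g ∈ functionals n, ∀ a, |g a| ≤ ‖a‖
  norm_le : ∀ {n a} {C : ℝ}, 0 ≤ C → P n a = a → (∀ g ∈ functionals n, |g a| ≤ C) → ‖a‖ ≤ C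

namespace ProjectionSystem

variable {E : Type*} [NormedAddCommGroup E] [NormedSpace ℝ E] (S : ProjectionSystem E)

/-- The range of `S.P n`. -/
abbrev range (n : ℕ) : Submodule ℝ E := (S.P n).range

instance (n : ℕ) : FiniteDimensional ℝ (S.range n) := S.finiteDimensional n

theorem mem_range {n : ℕ} {a : E} : a ∈ S.range n ↔ S.P n a = a := by
  refine ⟨?_, fun h => ⟨a, h⟩⟩
  rintro ⟨b, rfl⟩
  exact S.P_P_of_le le_rfl b

theorem monotone_range : Monotone S.range := fun k n h a ha => by
  rw [mem_range] at ha ⊢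
  rw [← ha, S.P_P_of_ge h]

/-- The operator `scale (m - 1) • P (m - 1)`, read as `0` for `m = 0`. -/
noncomputable def base : ℕ → E →L[ℝ] E
  | 0 => 0
  | m + 1 => scale m • S.P m

/-- The increment from `base m` to `base (m + 1)`. -/
noncomputable def incr (m : ℕ) : E →L[ℝ] E := scale m • S.P m - S.base m

theorem base_succ (m : ℕ) (a : E) : S.base (m + 1) a = scale m • S.P m a := rfl

theorem base_add_incr (m : ℕ) (a : E) : S.base m a + S.incr m a = scale m • S.P m a :=
  add_sub_cancel _ _

theorem norm_scale_smul_P_le (m : ℕ) (a : E) : ‖scale m • S.P m a‖ ≤ scale m * ‖a‖ := by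
  rw [norm_smul, Real.norm_of_nonneg (scale_pos m).le]
  exact mul_le_mul_of_nonneg_left (S.norm_P_le m a) (scale_pos m).le

theorem norm_base_le (m : ℕ) (a : E) : ‖S.base m a‖ ≤ ‖a‖ := by
  cases m with
  | zero => simp [base]
  | succ m =>
    exact (S.norm_scale_smul_P_le m a).trans
        (mul_le_of_le_one_left (norm_nonneg a) (scale_lt_one m).le)

theorem incr_mem_range (m : ℕ) (a : E) : S.incr m a ∈ S.range m := by
  refine sub_mem (Submodule.smul_mem _ _ ⟨a, rfl⟩) ?_
  cases m with
  | zero => exact zero_mem _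
  | succ m => exact Submodule.smul_mem _ _ (S.monotone_range m.le_succ ⟨a, rfl⟩)

theorem incr_succ {m : ℕ} {a : E} (ha : a ∈ S.range m) :
    S.incr (m + 1) a = (scale (m + 1) - scale m) • a := by
  have hincr : S.incr (m + 1) a = scale (m + 1) • S.P (m + 1) a - scale m • S.P m a := rfl
  rw [hincr, S.mem_range.1 ha, S.mem_range.1 (S.monotone_range m.le_succ ha), sub_smul]

end ProjectionSystem

/-! ### The space of a relation -/

/-- A reflexive space coding all finite `r`-chains starting at `q`: for each chain `t` a contraction
`read t` into `E`, and for each chain `s` an operator `write s` from `E`. Only the chain `s` itself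
reads off `write s a` at full size, and near every point all but finitely many of the conditions
`|g (ξ + read t x)| ≤ scale (lev t.tip)` are slack. -/
structure PathSpace {E Q : Type u} [NormedAddCommGroup E] [NormedSpace ℝ E]
    (S : ProjectionSystem E) (r : Q → Q → Prop) (lev : Q → ℕ) (q : Q) where
  Carrier : Type u
  [normedAddCommGroup : NormedAddCommGroup Carrier]
  [normedSpace : NormedSpace ℝ Carrier]
  [completeSpace : CompleteSpace Carrier]
  [separableSpace : TopologicalSpace.SeparableSpace Carrier]
  isReflexive : IsReflexiveSpace Carrier
  hasSmoothQuadratic : HasSmoothQuadratic Carrier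
  hasRotundQuadratic : HasRotundQuadratic Carrier
  read : Path r q → Carrier →L[ℝ] E
  write : Path r q → E →L[ℝ] Carrier
  norm_read_le : ∀ t x, ‖read t x‖ ≤ ‖x‖
  norm_write_le : ∀ s a, ‖write s a‖ ≤ 2 * ‖a‖
  norm_write_root_le : ∀ a, ‖write .root a‖ ≤ ‖S.incr (lev q) a‖
  norm_write_snoc_sub_le : ∀ s q' h, ∀ a ∈ S.range (lev s.tip),
    ‖write (s.snoc q' h) a - write s a‖ ≤ (scale (lev s.tip + 1) - scale (lev s.tip)) * ‖a‖
  norm_read_write_le : ∀ t s a,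
    ‖S.base (lev q) a + read t (write s a)‖ ≤ scale (lev t.tip) * ‖a‖
  read_write_self : ∀ s a,
    S.base (lev q) a + read s (write s a) = scale (lev s.tip) • S.P (lev s.tip) a
  locallyFinite : ∀ ξ ∈ S.range (lev q), ∀ x,
    (∀ t, ∀ g ∈ S.functionals (lev t.tip), |g (ξ + read t x)| ≤ midScale (lev t.tip)) →
    ∃ A : Set (Path r q), A.Finite ∧ ∀ᶠ p in 𝓝 (ξ, x), ∀ t ∉ A,
      ∀ g ∈ S.functionals (lev t.tip), |g (p.1 + read t p.2)| ≤ scale (lev t.tip)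

namespace PathSpace

variable {E Q : Type u} [NormedAddCommGroup E] [NormedSpace ℝ E] {S : ProjectionSystem E}
  {r : Q → Q → Prop} {lev : Q → ℕ} {q : Q}

instance : CoeSort (PathSpace S r lev q) (Type u) := ⟨Carrier⟩

attribute [instance] normedAddCommGroup normedSpace completeSpace separableSpace

variable (V : ∀ c : {q' // r q q'}, PathSpace S r lev c.1)

/-- The vector space underlying the space at `q`, built from the spaces at the successors of `q`. -/
abbrev Step : Type u := S.range (lev q) × HilbertSum fun c => V c

/-- The operators `read t` of the space at `q`. -/
noncomputable def stepRead : Path r q → Step V →L[ℝ] E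
  | .root => (S.range (lev q)).subtypeL ∘L .fst ℝ _ _
  | .cons c t => (S.range (lev q)).subtypeL ∘L .fst ℝ _ _ +
      (V c).read t ∘L lp.evalCLM ℝ (fun c => V c) 2 c ∘L .snd ℝ _ _

open Classical in
/-- The second components of the operators `write s` of the space at `q`. -/
noncomputable def stepWriteSnd : Path r q → E →L[ℝ] HilbertSum fun c => V c
  | .root => 0
  | .cons c s => lp.singleContinuousLinearMap ℝ (fun c => V c) 2 c ∘L (V c).write s

/-- The operators `write s` of the space at `q`. -/
noncomputable def stepWrite (s : Path r q) : E →L[ℝ] Step V :=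
  ((S.incr (lev q)).codRestrict _ (S.incr_mem_range (lev q))).prod (stepWriteSnd V s)

theorem stepRead_root (v : Step V) : stepRead V .root v = v.1 := rfl

theorem stepRead_cons (c : {q' // r q q'}) (t : Path r c.1) (v : Step V) :
    stepRead V (.cons c t) v = v.1 + (V c).read t (v.2 c) := rfl

theorem stepWrite_fst (s : Path r q) (a : E) : ((stepWrite V s a).1 : E) = S.incr (lev q) a := rfl

open Classical in
theorem stepWriteSnd_cons (c : {q' // r q q'}) (s : Path r c.1) (a : E) :
    stepWriteSnd V (.cons c s) a = lp.single 2 c ((V c).write s a) := rfl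

theorem norm_stepWriteSnd_cons (c : {q' // r q q'}) (s : Path r c.1) (a : E) :
    ‖stepWriteSnd V (.cons c s) a‖ = ‖(V c).write s a‖ := by
  classical
  rw [stepWriteSnd_cons, lp.norm_single (by norm_num)]

theorem norm_stepRead_le (t : Path r q) (v : Step V) : ‖stepRead V t v‖ ≤ ‖v.1‖ + ‖v.2‖ := by
  cases t with
  | root => exact le_add_of_nonneg_right (norm_nonneg v.2)
  | cons c t =>
    exact norm_add_le_of_le le_rfl
      (((V c).norm_read_le t (v.2 c)).trans (HilbertSum.norm_apply_le v.2 c))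

/-- The norm `fun v ↦ max ‖v.2‖ (⨆ t, ‖stepRead V t v‖)`. -/
noncomputable def stepNorm : EquivalentNorm (Step V) :=
  .iSup (fun t : Path r q => (.prod (.snd ℝ _ _) (stepRead V t) :
      Step V →L[ℝ] HilbertSum (fun c => V c) × E).toLinearMap)
    ⟨1, one_pos, fun v => ⟨.root, by rw [one_mul, Prod.norm_def, max_comm]; rfl⟩⟩
    ⟨2, fun v t => norm_prod_le_iff.2 ⟨(norm_snd_le v).trans (le_mul_of_one_le_left
      (norm_nonneg v) one_le_two), (norm_stepRead_le V t v).trans (by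
        linarith [norm_fst_le v, norm_snd_le v])⟩⟩

variable {V}

theorem norm_toSpace_stepNorm_le_iff {v : Step V} {K : ℝ} :
    ‖(stepNorm V).toSpace v‖ ≤ K ↔ ‖v.2‖ ≤ K ∧ ∀ t, ‖stepRead V t v‖ ≤ K :=
  EquivalentNorm.norm_toSpace_iSup_le_iff.trans
    ⟨fun h => ⟨(norm_prod_le_iff.1 (h .root)).1, fun t => (norm_prod_le_iff.1 (h t)).2⟩,
      fun h t => norm_prod_le_iff.2 ⟨h.1, h.2 t⟩⟩

theorem norm_stepRead_le_norm_toSpace (t : Path r q) (v : Step V) :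
    ‖stepRead V t v‖ ≤ ‖(stepNorm V).toSpace v‖ :=
  (norm_toSpace_stepNorm_le_iff.1 le_rfl).2 t

theorem norm_toSpace_stepNorm_le_add (v : Step V) :
    ‖(stepNorm V).toSpace v‖ ≤ ‖v.1‖ + ‖v.2‖ :=
  norm_toSpace_stepNorm_le_iff.2
    ⟨le_add_of_nonneg_left (norm_nonneg v.1), fun t => norm_stepRead_le V t v⟩

theorem base_add_stepRead_root (s : Path r q) (a : E) :
    S.base (lev q) a + stepRead V .root (stepWrite V s a) = scale (lev q) • S.P (lev q) a := by
  rw [stepRead_root, stepWrite_fst, S.base_add_incr]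

theorem base_add_stepRead_cons (c : {q' // r q q'}) (t : Path r c.1) (s : Path r q) (a : E) :
    S.base (lev q) a + stepRead V (.cons c t) (stepWrite V s a) =
      scale (lev q) • S.P (lev q) a + (V c).read t (stepWriteSnd V s a c) := by
  rw [stepRead_cons, stepWrite_fst, ← add_assoc, S.base_add_incr]
  rfl

theorem stepWriteSnd_apply_eq_zero_or (c : {q' // r q q'}) (s : Path r q) (a : E) :
    stepWriteSnd V s a c = 0 ∨ ∃ s', stepWriteSnd V s a c = (V c).write s' a := by
  classical
  cases s with
  | root => exact .inl rfl
  | cons c' s =>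
    rw [stepWriteSnd_cons]
    obtain rfl | hne := eq_or_ne c c'
    · exact .inr ⟨s, lp.single_apply_self ..⟩
    · exact .inl (lp.single_apply_ne _ _ _ hne)

theorem norm_base_add_stepRead_le (hlev : ∀ q q', r q q' → lev q' = lev q + 1) (t s : Path r q)
    (a : E) :
    ‖S.base (lev q) a + stepRead V t (stepWrite V s a)‖ ≤ scale (lev t.tip) * ‖a‖ := by
  have hroot : ‖scale (lev q) • S.P (lev q) a‖ ≤ scale (lev t.tip) * ‖a‖ := by
    grw [S.norm_scale_smul_P_le, strictMono_scale.monotone (t.level_le_level_tip hlev)]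
  cases t with
  | root => exact (congr_arg _ (base_add_stepRead_root s a)).trans_le hroot
  | cons c t =>
    rw [base_add_stepRead_cons]
    obtain hzero | ⟨s', hs'⟩ := stepWriteSnd_apply_eq_zero_or c s a
    · rwa [hzero, map_zero, add_zero]
    · rw [hs', ← S.base_succ, ← hlev _ _ c.2]
      exact (V c).norm_read_write_le t s' a

theorem base_add_stepRead_self (hlev : ∀ q q', r q q' → lev q' = lev q + 1) (s : Path r q)
    (a : E) :
    S.base (lev q) a + stepRead V s (stepWrite V s a) =
      scale (lev s.tip) • S.P (lev s.tip) a := by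
  classical
  cases s with
  | root => exact base_add_stepRead_root _ a
  | cons c s =>
    rw [base_add_stepRead_cons, stepWriteSnd_cons, lp.single_apply_self, ← S.base_succ,
      ← hlev _ _ c.2]
    exact (V c).read_write_self s a

theorem norm_toSpace_stepWrite_le (hlev : ∀ q q', r q q' → lev q' = lev q + 1) (s : Path r q)
    (a : E) : ‖(stepNorm V).toSpace (stepWrite V s a)‖ ≤ 2 * ‖a‖ := by
  refine norm_toSpace_stepNorm_le_iff.2 ⟨?_, fun t => ?_⟩
  · cases s with
    | root => exact norm_zero.trans_le (by positivity)
    | cons c s => exact (norm_stepWriteSnd_cons V c s a).trans_le ((V c).norm_write_le s a)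
  · calc ‖stepRead V t (stepWrite V s a)‖
        = ‖(S.base (lev q) a + stepRead V t (stepWrite V s a)) - S.base (lev q) a‖ := by
          rw [add_sub_cancel_left]
      _ ≤ scale (lev t.tip) * ‖a‖ + ‖a‖ :=
          norm_sub_le_of_le (norm_base_add_stepRead_le hlev t s a) (S.norm_base_le _ a)
      _ ≤ 1 * ‖a‖ + ‖a‖ := by gcongr; exact (scale_lt_one _).le
      _ = 2 * ‖a‖ := by ring

theorem norm_toSpace_stepWrite_root_le (a : E) :
    ‖(stepNorm V).toSpace (stepWrite V .root a)‖ ≤ ‖S.incr (lev q) a‖ :=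
  (norm_toSpace_stepNorm_le_add _).trans_eq ((congr_arg _ norm_zero).trans (add_zero _))

theorem norm_toSpace_stepWrite_sub_le (s s' : Path r q) (a : E) :
    ‖(stepNorm V).toSpace (stepWrite V s' a) - (stepNorm V).toSpace (stepWrite V s a)‖ ≤
      ‖stepWriteSnd V s' a - stepWriteSnd V s a‖ := by
  rw [← map_sub]
  refine (norm_toSpace_stepNorm_le_add _).trans_eq ?_
  rw [Prod.fst_sub, Prod.snd_sub, show (stepWrite V s' a).1 = (stepWrite V s a).1 from rfl,
    sub_self, norm_zero, zero_add]
  rfl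

theorem norm_stepWriteSnd_snoc_sub_le (hlev : ∀ q q', r q q' → lev q' = lev q + 1)
    (s : Path r q) (q' : Q) (h : r s.tip q') {a : E} (ha : a ∈ S.range (lev s.tip)) :
    ‖stepWriteSnd V (s.snoc q' h) a - stepWriteSnd V s a‖ ≤
      (scale (lev s.tip + 1) - scale (lev s.tip)) * ‖a‖ := by
  classical
  cases s with
  | root =>
    rw [show stepWriteSnd V .root a = 0 from rfl, sub_zero, Path.snoc, norm_stepWriteSnd_cons]
    refine ((V ⟨q', h⟩).norm_write_root_le a).trans_eq ?_
    rw [hlev _ _ h, S.incr_succ ha, norm_smul, Real.norm_of_nonneg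
      (sub_nonneg.2 (strictMono_scale (Nat.lt_succ_self _)).le)]
  | cons c s =>
    rw [Path.snoc, stepWriteSnd_cons, stepWriteSnd_cons, ← lp.single_sub,
      lp.norm_single (by norm_num)]
    exact (V c).norm_write_snoc_sub_le s q' h a ha

theorem eventually_norm_add_norm_apply_le {m : ℕ} {ξ : E} {v : Step V}
    (hξ : ‖ξ + v.1‖ ≤ midScale m) :
    ∃ A : Finset {q' // r q q'}, ∀ᶠ p : E × Step V in 𝓝 (ξ, v), ∀ c ∉ A,
      ‖p.1 + p.2.1‖ + ‖p.2.2 c‖ ≤ scale (m + 1) := by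
  classical
  obtain ⟨A, hA⟩ := ((HilbertSum.tendsto_tail v.2).norm.eventually (gt_mem_nhds
    (norm_zero.trans_lt (sub_pos.2 (midScale_lt_scale_succ m))))).exists
  have hcont : Continuous fun p : E × Step V =>
      ‖p.1 + p.2.1‖ + ‖HilbertSum.tail A p.2.2‖ := by fun_prop
  refine ⟨A, ?_⟩
  filter_upwards [(hcont.tendsto (ξ, v)).eventually (gt_mem_nhds
    ((add_lt_add_of_le_of_lt hξ hA).trans_eq (add_sub_cancel _ _)))] with p hp c hc
  refine le_trans (add_le_add_right ?_ _) hp.le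
  simpa [HilbertSum.tail_apply, hc] using HilbertSum.norm_apply_le (HilbertSum.tail A p.2.2) c

theorem stepRead_locallyFinite (hlev : ∀ q q', r q q' → lev q' = lev q + 1) {ξ : E}
    (hξ : ξ ∈ S.range (lev q)) (v : Step V) (hv : ∀ t, ∀ g ∈ S.functionals (lev t.tip),
      |g (ξ + stepRead V t v)| ≤ midScale (lev t.tip)) :
    ∃ A : Set (Path r q), A.Finite ∧ ∀ᶠ p in 𝓝 (ξ, v), ∀ t ∉ A,
      ∀ g ∈ S.functionals (lev t.tip), |g (p.1 + stepRead V t p.2)| ≤ scale (lev t.tip) := by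
  have hmem : ξ + v.1 ∈ S.range (lev q) := add_mem hξ v.1.2
  have hnorm : ‖ξ + v.1‖ ≤ midScale (lev q) :=
    S.norm_le ((scale_pos _).trans (scale_lt_midScale _)).le (S.mem_range.1 hmem) (hv .root)
  obtain ⟨A, hA⟩ := eventually_norm_add_norm_apply_le hnorm
  have hchild : ∀ c, ∃ B : Set (Path r c.1), B.Finite ∧ ∀ᶠ p in 𝓝 (ξ + v.1, v.2 c), ∀ t ∉ B,
      ∀ g ∈ S.functionals (lev t.tip), |g (p.1 + (V c).read t p.2)| ≤ scale (lev t.tip) :=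
    fun c => (V c).locallyFinite _ (hlev _ _ c.2 ▸ S.monotone_range (lev q).le_succ hmem) _
      fun t g hg => by simpa only [stepRead_cons, ← add_assoc, Path.tip] using hv (.cons c t) g hg
  choose B hBfin hB using hchild
  refine ⟨insert .root (⋃ c ∈ A, .cons c '' B c),
    (A.finite_toSet.biUnion fun c _ => (hBfin c).image _).insert _, ?_⟩
  have hcont : ∀ c, Continuous fun p : E × Step V => (p.1 + p.2.1, p.2.2 c) := fun c =>
    (continuous_fst.add (continuous_subtype_val.comp (continuous_fst.comp continuous_snd))).prodMk
      ((lp.evalCLM ℝ (fun c => V c) 2 c).continuous.comp (continuous_snd.comp continuous_snd))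
  filter_upwards [hA, (Finset.eventually_all A).2 fun c _ =>
    ((hcont c).tendsto (ξ, v)).eventually (hB c)] with p hp hpB t ht g hg
  cases t with
  | root => exact absurd (mem_insert _ _) ht
  | cons c t =>
    rw [stepRead_cons, ← add_assoc]
    by_cases hc : c ∈ A
    · exact hpB c hc t
        (fun htB => ht (.inr (mem_biUnion hc (mem_image_of_mem _ htB)))) g hg
    · calc |g (p.1 + p.2.1 + (V c).read t (p.2.2 c))|
          ≤ ‖p.1 + p.2.1 + (V c).read t (p.2.2 c)‖ := S.abs_apply_le g hg _
        _ ≤ ‖p.1 + p.2.1‖ + ‖p.2.2 c‖ := norm_add_le_of_le le_rfl ((V c).norm_read_le t _)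
        _ ≤ scale (lev q + 1) := hp c hc
        _ ≤ scale (lev t.tip) := strictMono_scale.monotone
          (hlev _ _ c.2 ▸ t.level_le_level_tip hlev)

variable (V)

/-- The space at `q`, built from the spaces at the successors of `q`. -/
noncomputable def step [Countable Q] (hlev : ∀ q q', r q q' → lev q' = lev q + 1) :
    PathSpace S r lev q where
  Carrier := (stepNorm V).Space
  completeSpace := by
    have : CompleteSpace (S.range (lev q)) := FiniteDimensional.complete ℝ _
    infer_instance
  separableSpace := by
    have : ProperSpace (S.range (lev q)) := FiniteDimensional.proper ℝ _
    have := HilbertSum.separableSpace (Y := fun c => V c)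
    infer_instance
  isReflexive := (IsReflexiveSpace.of_finiteDimensional.prod
    (HilbertSum.isReflexiveSpace fun c => (V c).isReflexive)).congr (stepNorm V).toSpace
  hasSmoothQuadratic := (HasSmoothQuadratic.of_finiteDimensional.prod
    (.hilbertSum (fun c => (V c).hasSmoothQuadratic) fun c => (V c).isReflexive)).congr
      (stepNorm V).toSpace
  hasRotundQuadratic := (HasRotundQuadratic.of_finiteDimensional.prod
    (.hilbertSum fun c => (V c).hasRotundQuadratic)).congr (stepNorm V).toSpace
  read t := stepRead V t ∘L (stepNorm V).toSpace.symm
  write s := (stepNorm V).toSpace ∘L stepWrite V s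
  norm_read_le t x := by
    simpa using norm_stepRead_le_norm_toSpace t ((stepNorm V).toSpace.symm x)
  norm_write_le s a := by simpa using norm_toSpace_stepWrite_le hlev s a
  norm_write_root_le a := by simpa using norm_toSpace_stepWrite_root_le a
  norm_write_snoc_sub_le s q' h a ha := by
    simpa using (norm_toSpace_stepWrite_sub_le s _ a).trans
      (norm_stepWriteSnd_snoc_sub_le hlev s q' h ha)
  norm_read_write_le t s a := by simpa using norm_base_add_stepRead_le hlev t s a
  read_write_self s a := by simpa using base_add_stepRead_self hlev s a
  locallyFinite ξ hξ x hx := by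
    obtain ⟨A, hA, hev⟩ := stepRead_locallyFinite hlev hξ ((stepNorm V).toSpace.symm x) hx
    exact ⟨A, hA, ((continuous_id.prodMap (stepNorm V).toSpace.symm.continuous).tendsto
      (ξ, x)).eventually hev⟩

/-- The space of a well-founded relation, by recursion. -/
noncomputable def ofWellFounded [Countable Q] (hlev : ∀ q q', r q q' → lev q' = lev q + 1)
    (hwf : WellFounded (Function.swap r)) (q : Q) : PathSpace S r lev q :=
  hwf.fix (fun _ V => step (fun c => V c.1 c.2) hlev) q

end PathSpace

/-! ### Differentiability of a norm and of its dual -/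

section Norm

variable {V : Type*} [NormedAddCommGroup V] [NormedSpace ℝ V]

theorem exists_apply_eq_one_of_convexOn {Φ : V → ℝ} {x : V} (hΦ : ConvexOn ℝ univ Φ)
    (hc : Continuous Φ) (h0 : Φ 0 < Φ x) :
    ∃ ℓ : StrongDual ℝ V, ℓ x = 1 ∧ ∀ y, ℓ y ≠ 0 → Φ x ≤ Φ ((ℓ y)⁻¹ • y) := by
  obtain ⟨D, hD⟩ := exists_subgradient hΦ hc x
  have hDx : 0 < D x := by
    have := hD 0
    rw [zero_sub, map_neg] at this
    linarith
  refine ⟨(D x)⁻¹ • D, inv_mul_cancel₀ hDx.ne', fun y hy => ?_⟩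
  have hDy : D y ≠ 0 := right_ne_zero_of_mul hy
  simpa [mul_right_comm _ (D x), hDy] using hD (((D x)⁻¹ * D y)⁻¹ • y)

theorem apply_inv_smul_self_le_one {Φ : V → ℝ} {y : V} (hΦ : ConvexOn ℝ univ Φ) (h0 : Φ 0 ≤ 0)
    (hy : 1 ≤ Φ y) : Φ ((Φ y)⁻¹ • y) ≤ 1 := by
  have hpos : 0 < Φ y := one_pos.trans_le hy
  have hinv := inv_le_one_of_one_le₀ hy
  have := hΦ.2 (mem_univ y) (mem_univ 0) (inv_nonneg.2 hpos.le) (sub_nonneg.2 hinv)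
    (add_sub_cancel _ _)
  rw [smul_zero, add_zero, smul_eq_mul, smul_eq_mul, inv_mul_cancel₀ hpos.ne'] at this
  nlinarith

-- If `ℓ x = 1` and `Φ ≥ 1` on `{ℓ = 1}`, then `y ↦ ℓ y * Φ (y / ℓ y)` dominates the norm near `x`.
theorem differentiableAt_norm_of_eventually_le_one {Φ : V → ℝ} {x : V} (hΦ : ConvexOn ℝ univ Φ)
    (hc : Continuous Φ) (h0 : Φ 0 ≤ 0) (hdiff : DifferentiableAt ℝ Φ x) (hx : ‖x‖ = 1)
    (hΦx : Φ x = 1) (hball : ∀ᶠ y in 𝓝 x, Φ y ≤ 1 → ‖y‖ ≤ 1) :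
    DifferentiableAt ℝ (fun v : V => ‖v‖) x := by
  obtain ⟨ℓ, hℓx, hℓ⟩ := exists_apply_eq_one_of_convexOn hΦ hc (h0.trans_lt (hΦx ▸ one_pos))
  let w : V → V := fun y => (ℓ y)⁻¹ • y
  have hwx : w x = x := by simp [w, hℓx]
  have hw : DifferentiableAt ℝ w x :=
    (ℓ.differentiableAt.fun_inv (hℓx ▸ one_ne_zero)).smul differentiableAt_id
  have hΦw : DifferentiableAt ℝ (fun y => Φ (w y)) x := .comp x (hwx.symm ▸ hdiff) hw
  have hscaled : ContinuousAt (fun y => (Φ (w y))⁻¹ • w y) x :=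
    (hΦw.continuousAt.inv₀ (by simp [hwx, hΦx])).smul hw.continuousAt
  have hev := hscaled.tendsto.eventually (by simpa [hwx, hΦx] using hball)
  have hℓpos : ∀ᶠ y in 𝓝 x, 0 < ℓ y :=
    ℓ.continuous.continuousAt.eventually (lt_mem_nhds (hℓx ▸ one_pos))
  refine differentiableAt_of_eventually_le (g := fun y => ℓ y * Φ (w y)) convexOn_univ_norm
    continuous_norm (ℓ.differentiableAt.mul hΦw) ?_ (by simp [hwx, hΦx, hℓx, hx])
  filter_upwards [hev, hℓpos] with y hy hℓy
  have hone : 1 ≤ Φ (w y) := hΦx ▸ hℓ y hℓy.ne'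
  have hpos : 0 < Φ (w y) := one_pos.trans_le hone
  have hnorm := hy (apply_inv_smul_self_le_one hΦ h0 hone)
  rwa [norm_smul, norm_smul, norm_inv, norm_inv, Real.norm_of_nonneg hpos.le,
    Real.norm_of_nonneg hℓy.le, inv_mul_le_one₀ hpos, inv_mul_le_iff₀ hℓy] at hnorm

theorem differentiableAt_norm_of_forall_norm_eq_one
    (h : ∀ x : V, ‖x‖ = 1 → DifferentiableAt ℝ (fun v : V => ‖v‖) x) {v : V} (hv : v ≠ 0) :
    DifferentiableAt ℝ (fun v : V => ‖v‖) v :=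
  (differentiableAt_norm_smul (inv_ne_zero (norm_ne_zero_iff.2 hv))).2 <|
    h _ (norm_smul_inv_norm (𝕜 := ℝ) hv)

theorem one_le_of_le_apply_of_eventually {Φ : V → ℝ} {x : V} (hΦ : ConvexOn ℝ univ Φ)
    (hc : Continuous Φ) (hΦx : Φ x ≤ 1) {f : StrongDual ℝ V} (hfx : 0 < f x)
    (hball : ∀ᶠ y in 𝓝 x, Φ y ≤ 1 → f y ≤ f x) {y : V} (hy : f x ≤ f y) : 1 ≤ Φ y := by
  have hlt : ∀ z, f x < f z → 1 < Φ z := by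
    intro z hz
    by_contra! hΦz
    have hline : Tendsto (fun t : ℝ => AffineMap.lineMap x z t) (𝓝[>] 0) (𝓝 x) := by
      refine (AffineMap.lineMap_continuous.tendsto' 0 x ?_).mono_left nhdsWithin_le_nhds
      exact AffineMap.lineMap_apply_zero x z
    have hIoo : Ioo (0 : ℝ) 1 ∈ 𝓝[>] (0 : ℝ) := Ioo_mem_nhdsGT one_pos
    obtain ⟨t, hball, ht0, ht1⟩ := ((hline.eventually hball).and hIoo).exists
    rw [AffineMap.lineMap_apply_module, map_add, map_smul, map_smul, smul_eq_mul,
      smul_eq_mul] at hball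
    have := hball <| (hΦ.2 (mem_univ x) (mem_univ z) (sub_nonneg.2 ht1.le) ht0.le
      (sub_add_cancel 1 t)).trans (by simp only [smul_eq_mul]; nlinarith)
    nlinarith
  have hlim : Tendsto (fun t : ℝ => Φ (y + t • x)) (𝓝[>] 0) (𝓝 (Φ y)) := by
    refine Tendsto.mono_left ?_ nhdsWithin_le_nhds
    exact Continuous.tendsto' (by fun_prop) _ _ (by simp)
  refine ge_of_tendsto hlim ?_
  filter_upwards [self_mem_nhdsWithin] with t ht
  refine (hlt _ ?_).le
  rw [map_add, map_smul, smul_eq_mul]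
  nlinarith [mul_pos ht hfx]

theorem tendsto_midpointDefect_of_tendsto_apply {Φ : V → ℝ} {x : V} (hΦ : ConvexOn ℝ univ Φ)
    (hc : Continuous Φ) (hnn : ∀ y, 0 ≤ Φ y) (hΦx : Φ x ≤ 1) {f : StrongDual ℝ V} (hfx : 0 < f x)
    (hball : ∀ᶠ y in 𝓝 x, Φ y ≤ 1 → f y ≤ f x) {u : ℕ → V} (hu : ∀ n, Φ (u n) ≤ 1)
    (hle : ∀ n, f (u n) ≤ f x) (hlim : Tendsto (fun n => f (u n)) atTop (𝓝 (f x))) :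
    Tendsto (fun n => midpointDefect Φ (u n) x) atTop (𝓝 0) := by
  set m := f x
  let w : ℕ → V := fun n => midpoint ℝ (u n) x
  have hfw : ∀ n, f (w n) = (f (u n) + m) / 2 := fun n => by
    simp only [w, midpoint_eq_smul_add, map_smul, map_add, invOf_eq_inv, smul_eq_mul, m]
    ring
  let t : ℕ → ℝ := fun n => (m - f (w n)) / (2 * m - f (w n))
  have hden : ∀ n, 0 < 2 * m - f (w n) := fun n => by linarith [hfw n, hle n]
  have ht0 : ∀ n, 0 ≤ t n := fun n => div_nonneg (by linarith [hfw n, hle n]) (hden n).le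
  have ht1 : ∀ n, t n ≤ 1 := fun n => (div_le_one (hden n)).2 (by linarith)
  have hlower : ∀ n, 1 - t n * Φ ((2 : ℝ) • x) ≤ Φ (w n) := fun n => by
    have hz : m ≤ f ((1 - t n) • w n + t n • (2 : ℝ) • x) := by
      have : t n * (2 * m - f (w n)) = m - f (w n) := div_mul_cancel₀ _ (hden n).ne'
      simp only [map_add, map_smul, smul_eq_mul]
      linarith
    have hone := one_le_of_le_apply_of_eventually hΦ hc hΦx hfx hball hz
    have hconv := hΦ.2 (mem_univ (w n)) (mem_univ ((2 : ℝ) • x)) (sub_nonneg.2 (ht1 n)) (ht0 n)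
      (sub_add_cancel 1 (t n))
    simp only [smul_eq_mul] at hconv
    nlinarith [hnn (w n), ht0 n]
  have ht : Tendsto t atTop (𝓝 0) := by
    have hfw' : Tendsto (fun n => f (w n)) atTop (𝓝 m) := by
      simpa [hfw] using (hlim.add_const m).div_const 2
    have := (hfw'.const_sub m).div (hfw'.const_sub (2 * m)) (by linarith)
    rwa [sub_self, zero_div] at this
  refine squeeze_zero (fun n => midpointDefect_nonneg hΦ _ _) (fun n => ?_)
    (by simpa using (ht.mul_const (Φ ((2 : ℝ) • x))).const_mul 2)
  rw [midpointDefect]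
  linarith [hlower n, hu n]

theorem IsReflexiveSpace.differentiableAt_norm_strongDual (hV : IsReflexiveSpace V)
    {f : StrongDual ℝ V} {x : V}
    (hexp : ∀ u : ℕ → V, (∀ n, ‖u n‖ ≤ 1) → Tendsto (fun n => f (u n)) atTop (𝓝 ‖f‖) →
      Tendsto u atTop (𝓝 x)) :
    DifferentiableAt ℝ (fun h : StrongDual ℝ V => ‖h‖) f := by
  choose y hy hfy using fun k : StrongDual ℝ V => hV.exists_norm_le_one_apply_eq_norm (f + k)
  have hle : ∀ (g : StrongDual ℝ V) k, g (y k) ≤ ‖g‖ := fun g k =>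
    (le_abs_self _).trans <| (g.le_opNorm_of_le (hy k)).trans_eq (mul_one _)
  have hlim : Tendsto y (𝓝 0) (𝓝 x) := by
    refine tendsto_of_seq_tendsto fun k hk => hexp _ (fun n => hy _) ?_
    have hlower : Tendsto (fun n => ‖f + k n‖ - ‖k n‖) atTop (𝓝 ‖f‖) := by
      simpa using (hk.const_add f).norm.sub hk.norm
    refine tendsto_of_tendsto_of_tendsto_of_le_of_le hlower tendsto_const_nhds (fun n => ?_)
      fun n => hle f (k n)
    have := hfy (k n)
    rw [add_apply] at this
    simp only [Function.comp_apply]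
    linarith [hle (k n) (k n)]
  have hdiff : Tendsto (fun k => ‖y k - y (-k)‖) (𝓝 0) (𝓝 0) := by
    simpa using (hlim.sub (hlim.comp (continuous_neg.tendsto' 0 0 neg_zero))).norm
  refine differentiableAt_of_isLittleO_midpointDefect convexOn_univ_norm continuous_norm <|
    Asymptotics.isLittleO_iff.2 fun ε hε => ?_
  filter_upwards [hdiff.eventually_le_const hε] with k hk
  rw [Real.norm_of_nonneg (midpointDefect_nonneg convexOn_univ_norm _ _), midpointDefect_add_sub]
  have hpos := hfy k
  have hneg := hfy (-k)
  have hk' := (le_abs_self _).trans (k.le_opNorm_of_le hk)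
  rw [← sub_eq_add_neg] at hneg
  simp only [add_apply, sub_apply, map_sub] at hpos hneg hk'
  linarith [hle f k, hle f (-k)]

end Norm

/-! ### Locally finite renorming -/

namespace EquivalentNorm

variable {Y : Type*} [NormedAddCommGroup Y] [NormedSpace ℝ Y] {s : Set Y} {r R : ℝ}

/-- The gauge of a bounded symmetric convex neighbourhood of the origin. -/
noncomputable def ofUnitBall (hs : Convex ℝ s) (hneg : ∀ y ∈ s, -y ∈ s) (hr : 0 < r)
    (hrs : Metric.ball 0 r ⊆ s) (hR : 0 < R) (hsR : s ⊆ Metric.closedBall 0 R) :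
    EquivalentNorm Y :=
  have habs : Absorbent ℝ s :=
    absorbent_nhds_zero (mem_of_superset (Metric.ball_mem_nhds 0 hr) hrs)
  { toSeminorm := gaugeSeminorm ((balanced_iff_neg_mem hs).2 fun {y} => hneg y) hs habs
    exists_le_apply := ⟨R⁻¹, inv_pos.2 hR, fun y => by
      rw [← div_eq_inv_mul]
      exact le_gauge_of_subset_closedBall habs hR.le hsR⟩
    exists_apply_le := ⟨r⁻¹, fun y => by
      rw [le_inv_mul_iff₀ hr]
      exact mul_gauge_le_norm hrs⟩ }

variable {hs : Convex ℝ s} {hneg : ∀ y ∈ s, -y ∈ s} {hr : 0 < r} {hrs : Metric.ball 0 r ⊆ s}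
  {hR : 0 < R} {hsR : s ⊆ Metric.closedBall 0 R}

theorem norm_toSpace_ofUnitBall_le_one_iff (hclosed : IsClosed s) {y : Y} :
    ‖(ofUnitBall hs hneg hr hrs hR hsR).toSpace y‖ ≤ 1 ↔ y ∈ s := by
  have hgauge := gauge_le_one_iff_mem_closure hs
    (mem_of_superset (Metric.ball_mem_nhds 0 hr) hrs) (x := y)
  rw [hclosed.closure_eq] at hgauge
  rw [norm_toSpace]
  exact hgauge

theorem norm_toSpace_ofUnitBall_le (y : Y) :
    ‖(ofUnitBall hs hneg hr hrs hR hsR).toSpace y‖ ≤ r⁻¹ * ‖y‖ := by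
  rw [norm_toSpace, le_inv_mul_iff₀ hr]
  exact mul_gauge_le_norm hrs

end EquivalentNorm

/-- The squared distance from `t` to `[-τ, τ]`. -/
noncomputable def excessSq (τ t : ℝ) : ℝ := max (|t| - τ) 0 ^ 2

theorem excessSq_nonneg (τ t : ℝ) : 0 ≤ excessSq τ t := sq_nonneg _

theorem excessSq_neg (τ t : ℝ) : excessSq τ (-t) = excessSq τ t := by
  rw [excessSq, excessSq, abs_neg]

theorem excessSq_eq_zero {τ t : ℝ} (h : |t| ≤ τ) : excessSq τ t = 0 := by
  rw [excessSq, max_eq_right (sub_nonpos.2 h), zero_pow two_ne_zero]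

theorem abs_le_of_excessSq_le {τ β t : ℝ} (hβ : τ ≤ β) (h : excessSq τ t ≤ (β - τ) ^ 2) :
    |t| ≤ β := by
  have := abs_le_of_sq_le_sq' h (sub_nonneg.2 hβ)
  linarith [le_max_left (|t| - τ) 0]

theorem convexOn_excessSq (τ : ℝ) : ConvexOn ℝ univ (excessSq τ) := by
  have habs : ConvexOn ℝ univ fun t : ℝ => |t| := convexOn_univ_norm
  exact ((habs.add_const (-τ)).sup (convexOn_const 0 convex_univ)).pow
    (fun _ _ => le_max_right _ _) 2

theorem continuous_excessSq (τ : ℝ) : Continuous (excessSq τ) := by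
  unfold excessSq
  fun_prop

theorem excessSq_le_sub_sq {τ c : ℝ} (hc : |c| ≤ τ) (t : ℝ) : excessSq τ t ≤ (t - c) ^ 2 := by
  rw [excessSq, ← sq_abs (t - c)]
  gcongr
  refine max_le ?_ (abs_nonneg _)
  linarith [abs_sub_abs_le_abs_sub t c]

theorem exists_excessSq_eq_sub_sq {τ : ℝ} (hτ : 0 ≤ τ) (t : ℝ) :
    ∃ c, |c| ≤ τ ∧ excessSq τ t = (t - c) ^ 2 := by
  rcases le_total |t| τ with h | h
  · exact ⟨t, h, by rw [excessSq_eq_zero h, sub_self, zero_pow two_ne_zero]⟩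
  have hexcess : excessSq τ t = (|t| - τ) ^ 2 := by rw [excessSq, max_eq_left (sub_nonneg.2 h)]
  rcases abs_choice t with ht | ht
  · exact ⟨τ, (abs_of_nonneg hτ).le, by rw [hexcess, ht]⟩
  · refine ⟨-τ, by rw [abs_neg, abs_of_nonneg hτ], ?_⟩
    rw [hexcess, ht]
    ring

theorem differentiable_excessSq {τ : ℝ} (hτ : 0 ≤ τ) : Differentiable ℝ (excessSq τ) := fun t =>
  let ⟨c, hc, heq⟩ := exists_excessSq_eq_sub_sq hτ t
  differentiableAt_of_eventually_le (g := fun t => (t - c) ^ 2) (convexOn_excessSq τ)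
    (continuous_excessSq τ) (by fun_prop) (.of_forall (excessSq_le_sub_sq hc)) heq

/-- Data for a locally finite renorming of `Y`: functionals `functional j` with thresholds
`inner j < outer j`, of which only finitely many exceed their inner threshold near a point where
none exceeds its outer threshold, and a function `core` comparable to `‖·‖ ^ 2` that provides the
smoothness or rotundity of the new norm. -/
structure PenaltySystem (Y J : Type*) [NormedAddCommGroup Y] [NormedSpace ℝ Y] where
  functional : J → StrongDual ℝ Y
  inner : J → ℝ
  outer : J → ℝ
  core : Y → ℝ
  half_le_inner : ∀ j, 1 / 2 ≤ inner j
  inner_lt_outer : ∀ j, inner j < outer j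
  abs_functional_le : ∀ j y, |functional j y| ≤ ‖y‖
  locallyFinite : ∀ y, (∀ j, |functional j y| ≤ outer j) →
    ∃ A : Finset J, ∀ᶠ z in 𝓝 y, ∀ j ∉ A, |functional j z| ≤ inner j
  quadraticallyBounded : QuadraticallyBounded core 2
  half_norm_sq_le : ∀ y, ‖y‖ ^ 2 / 2 ≤ core y

namespace PenaltySystem

variable {Y J : Type*} [NormedAddCommGroup Y] [NormedSpace ℝ Y] (σ : PenaltySystem Y J)

/-- The cost of exceeding the inner thresholds in `A`, normalized to be at least `1` where an outer
threshold is exceeded. -/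
noncomputable def penalty (A : Finset J) (y : Y) : ℝ :=
  ∑ j ∈ A, excessSq (σ.inner j) (σ.functional j y) / (σ.outer j - σ.inner j) ^ 2

/-- The function whose sublevel set at height `1` is, locally, the new unit ball. -/
noncomputable def potential (A : Finset J) (y : Y) : ℝ := σ.penalty A y + 1 / 8 * σ.core y

variable (A : Finset J)

theorem inner_nonneg (j : J) : 0 ≤ σ.inner j := one_half_pos.le.trans (σ.half_le_inner j)

theorem penaltyTerm_nonneg (j : J) (y : Y) :
    0 ≤ excessSq (σ.inner j) (σ.functional j y) / (σ.outer j - σ.inner j) ^ 2 :=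
  div_nonneg (excessSq_nonneg _ _) (sq_nonneg _)

theorem penalty_nonneg (y : Y) : 0 ≤ σ.penalty A y :=
  Finset.sum_nonneg fun j _ => σ.penaltyTerm_nonneg j y

theorem potential_nonneg (y : Y) : 0 ≤ σ.potential A y :=
  add_nonneg (σ.penalty_nonneg A y) (mul_nonneg (by norm_num) (σ.quadraticallyBounded.nonneg y))

theorem penalty_neg (y : Y) : σ.penalty A (-y) = σ.penalty A y := by
  simp only [penalty, map_neg, excessSq_neg]

theorem potential_neg (y : Y) : σ.potential A (-y) = σ.potential A y := by
  rw [potential, potential, penalty_neg, σ.quadraticallyBounded.map_neg]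

theorem penalty_eq_zero {y : Y} (hy : ∀ j ∈ A, |σ.functional j y| ≤ σ.inner j) :
    σ.penalty A y = 0 :=
  Finset.sum_eq_zero fun j hj => by rw [excessSq_eq_zero (hy j hj), zero_div]

theorem potential_zero : σ.potential A 0 = 0 := by
  rw [potential, σ.quadraticallyBounded.map_zero, σ.penalty_eq_zero A fun j _ => ?_]
  · simp
  · simpa using σ.inner_nonneg j

theorem convexOn_penalty : ConvexOn ℝ univ (σ.penalty A) := by
  refine convexOn_sum A fun j _ => ?_
  simp only [div_eq_inv_mul]
  exact ((convexOn_excessSq _).comp_linearMap (σ.functional j : Y →ₗ[ℝ] ℝ)).smul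
    (inv_nonneg.2 (sq_nonneg _))

theorem convexOn_potential : ConvexOn ℝ univ (σ.potential A) :=
  (σ.convexOn_penalty A).add (σ.quadraticallyBounded.convexOn.smul (by norm_num))

theorem continuous_potential : Continuous (σ.potential A) := by
  refine .add (continuous_finsetSum A fun j _ => ?_) (σ.quadraticallyBounded.continuous.const_mul _)
  exact ((continuous_excessSq _).comp (σ.functional j).continuous).div_const _

theorem differentiable_potential (hcore : Differentiable ℝ σ.core) :
    Differentiable ℝ (σ.potential A) := by
  refine .add (.fun_sum fun j _ => ?_) (hcore.const_mul _)
  simp only [div_eq_inv_mul]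
  exact ((differentiable_excessSq (σ.inner_nonneg j)).comp
    (σ.functional j).differentiable).const_mul _

theorem midpointDefect_core_le (x y : Y) :
    midpointDefect σ.core x y ≤ 8 * midpointDefect (σ.potential A) x y := by
  have := midpointDefect_nonneg (σ.convexOn_penalty A) x y
  have hadd := midpointDefect_add (σ.penalty A) (fun z => 1 / 8 * σ.core z) x y
  rw [midpointDefect_const_mul] at hadd
  change midpointDefect (σ.potential A) x y = _ at hadd
  linarith

/-- The new unit ball. -/
def unitBall : Set Y := {y | ∀ A, σ.potential A y ≤ 1}

theorem convex_unitBall : Convex ℝ σ.unitBall := by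
  rw [unitBall, ofPred_forall]
  exact convex_iInter fun A => by simpa using (σ.convexOn_potential A).convex_le 1

theorem isClosed_unitBall : IsClosed σ.unitBall := by
  rw [unitBall, ofPred_forall]
  exact isClosed_iInter fun A => isClosed_le (σ.continuous_potential A) continuous_const

theorem neg_mem_unitBall {y : Y} (hy : y ∈ σ.unitBall) : -y ∈ σ.unitBall := fun A => by
  rw [potential_neg]
  exact hy A

theorem unitBall_subset_closedBall : σ.unitBall ⊆ Metric.closedBall 0 4 := fun y hy => by
  rw [mem_closedBall_zero_iff]
  have h := hy ∅
  rw [potential] at h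
  nlinarith [σ.half_norm_sq_le y, σ.penalty_nonneg ∅ y]

theorem mem_unitBall_of_le_inner {y : Y} (hy : ∀ j, |σ.functional j y| ≤ σ.inner j)
    (hy2 : ‖y‖ ≤ 2) : y ∈ σ.unitBall := fun A => by
  rw [potential, σ.penalty_eq_zero A fun j _ => hy j]
  have h := σ.quadraticallyBounded.le y
  rw [NNReal.coe_ofNat] at h
  nlinarith [norm_nonneg y]

theorem ball_subset_unitBall : Metric.ball 0 (1 / 2) ⊆ σ.unitBall := fun y hy => by
  have hy : ‖y‖ ≤ 1 / 2 := (mem_ball_zero_iff.1 hy).le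
  exact σ.mem_unitBall_of_le_inner
    (fun j => (σ.abs_functional_le j y).trans (hy.trans (σ.half_le_inner j))) (by linarith)

theorem abs_functional_le_outer {y : Y} (hy : y ∈ σ.unitBall) (j : J) :
    |σ.functional j y| ≤ σ.outer j := by
  have h := hy {j}
  rw [potential, penalty, Finset.sum_singleton] at h
  refine abs_le_of_excessSq_le (σ.inner_lt_outer j).le <|
    (div_le_one (by have := σ.inner_lt_outer j; nlinarith)).1 ?_
  linarith [σ.quadraticallyBounded.nonneg y]

theorem exists_eventually_mem_unitBall {y : Y} (hy : y ∈ σ.unitBall) :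
    ∃ A, ∀ᶠ z in 𝓝 y, σ.potential A z ≤ 1 → z ∈ σ.unitBall := by
  classical
  obtain ⟨A, hA⟩ := σ.locallyFinite y (σ.abs_functional_le_outer hy)
  refine ⟨A, hA.mono fun z hz hzA B => le_trans ?_ hzA⟩
  rw [potential, potential]
  gcongr
  calc σ.penalty B z ≤ σ.penalty (A ∪ B) z :=
        Finset.sum_le_sum_of_subset_of_nonneg Finset.subset_union_right fun j _ _ =>
          σ.penaltyTerm_nonneg j z
    _ = σ.penalty A z := by
        refine (Finset.sum_subset Finset.subset_union_left fun j _ hj => ?_).symm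
        rw [excessSq_eq_zero (hz j hj), zero_div]

/-- The norm with unit ball `σ.unitBall`. -/
noncomputable def norm : EquivalentNorm Y :=
  .ofUnitBall σ.convex_unitBall (fun _ => σ.neg_mem_unitBall) one_half_pos σ.ball_subset_unitBall
    (by norm_num) σ.unitBall_subset_closedBall

variable {σ}

theorem norm_toSpace_le_one_iff {y : Y} : ‖σ.norm.toSpace y‖ ≤ 1 ↔ y ∈ σ.unitBall :=
  EquivalentNorm.norm_toSpace_ofUnitBall_le_one_iff σ.isClosed_unitBall

theorem norm_toSpace_le (y : Y) : ‖σ.norm.toSpace y‖ ≤ 2 * ‖y‖ := by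
  have h : ‖σ.norm.toSpace y‖ ≤ (1 / 2)⁻¹ * ‖y‖ := EquivalentNorm.norm_toSpace_ofUnitBall_le y
  simpa using h

theorem abs_functional_le_outer_mul (j : J) (y : Y) :
    |σ.functional j y| ≤ σ.outer j * ‖σ.norm.toSpace y‖ := by
  rcases eq_or_ne y 0 with rfl | hy
  · simp
  have hy' : 0 < ‖σ.norm.toSpace y‖ := norm_pos_iff.2 (by simpa using hy)
  have hmem : ‖σ.norm.toSpace y‖⁻¹ • y ∈ σ.unitBall := norm_toSpace_le_one_iff.1 <| by
    rw [map_smul, norm_smul, norm_inv, norm_norm, inv_mul_cancel₀ hy'.ne']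
  have h := σ.abs_functional_le_outer hmem j
  rwa [map_smul, smul_eq_mul, abs_mul, abs_of_pos (inv_pos.2 hy'), inv_mul_le_iff₀' hy'] at h

theorem exists_eventually_norm_le_one {v : σ.norm.Space} (hv : ‖v‖ ≤ 1) :
    ∃ A, ∀ᶠ w in 𝓝 v, σ.potential A (σ.norm.toSpace.symm w) ≤ 1 → ‖w‖ ≤ 1 := by
  obtain ⟨A, hA⟩ := σ.exists_eventually_mem_unitBall (y := σ.norm.toSpace.symm v)
    (norm_toSpace_le_one_iff.1 (by simpa using hv))
  refine ⟨A, (σ.norm.toSpace.symm.continuous.continuousAt.eventually hA).mono fun w hw hle => ?_⟩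
  simpa using norm_toSpace_le_one_iff.2 (hw hle)

theorem potential_symm_le_one {v : σ.norm.Space} (hv : ‖v‖ ≤ 1) (A : Finset J) :
    σ.potential A (σ.norm.toSpace.symm v) ≤ 1 :=
  norm_toSpace_le_one_iff.1 (by simpa using hv) A

theorem convexOn_potential_symm (A : Finset J) :
    ConvexOn ℝ univ fun v => σ.potential A (σ.norm.toSpace.symm v) :=
  (σ.convexOn_potential A).comp_linearMap (σ.norm.toSpace.symm : σ.norm.Space →ₗ[ℝ] Y)

theorem continuous_potential_symm (A : Finset J) :
    Continuous fun v => σ.potential A (σ.norm.toSpace.symm v) :=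
  (σ.continuous_potential A).comp σ.norm.toSpace.symm.continuous

theorem differentiableAt_norm (hcore : Differentiable ℝ σ.core) {v : σ.norm.Space} (hv : v ≠ 0) :
    DifferentiableAt ℝ (fun w : σ.norm.Space => ‖w‖) v := by
  refine differentiableAt_norm_of_forall_norm_eq_one (fun x hx => ?_) hv
  obtain ⟨A, hA⟩ := exists_eventually_norm_le_one hx.le
  have hle := potential_symm_le_one hx.le A
  obtain ⟨f, hf, hfx⟩ := exists_dual_vector ℝ x (hx.trans_ne one_ne_zero)
  have hfx : f x = 1 := by simpa [hx] using hfx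
  have hfle : ∀ w, ‖w‖ ≤ 1 → f w ≤ f x := fun w hw => by
    rw [hfx, ← hf, ← mul_one ‖f‖]
    exact (le_abs_self _).trans (f.le_opNorm_of_le hw)
  refine differentiableAt_norm_of_eventually_le_one (convexOn_potential_symm A)
    (continuous_potential_symm A) (by simp [potential_zero]) ?_ hx (hle.antisymm ?_) hA
  · exact ((σ.differentiable_potential A hcore).comp σ.norm.toSpace.symm.differentiable) x
  · exact one_le_of_le_apply_of_eventually (convexOn_potential_symm A) (continuous_potential_symm A)
      hle (hfx ▸ one_pos) (hA.mono fun w hw hw' => hfle w (hw hw')) le_rfl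

theorem tendsto_of_tendsto_apply (hcore : LocallyUniformlyRotund σ.core)
    {f : StrongDual ℝ σ.norm.Space} {v : σ.norm.Space} (hf : f ≠ 0) (hv : ‖v‖ = 1)
    (hfv : f v = ‖f‖) {u : ℕ → σ.norm.Space} (hu : ∀ n, ‖u n‖ ≤ 1)
    (hlim : Tendsto (fun n => f (u n)) atTop (𝓝 ‖f‖)) : Tendsto u atTop (𝓝 v) := by
  have hfle : ∀ w, ‖w‖ ≤ 1 → f w ≤ f v := fun w hw => by
    rw [hfv, ← mul_one ‖f‖]
    exact (le_abs_self _).trans (f.le_opNorm_of_le hw)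
  obtain ⟨A, hA⟩ := exists_eventually_norm_le_one hv.le
  have hdefect := tendsto_midpointDefect_of_tendsto_apply (convexOn_potential_symm A)
    (continuous_potential_symm A) (fun _ => σ.potential_nonneg A _) (potential_symm_le_one hv.le A)
    (hfv ▸ norm_pos_iff.2 hf) (hA.mono fun w hw hw' => hfle w (hw hw'))
    (fun n => potential_symm_le_one (hu n) A) (fun n => hfle _ (hu n)) (hfv ▸ hlim)
  have hcomp : ∀ n, midpointDefect (fun v => σ.potential A (σ.norm.toSpace.symm v)) (u n) v =
      midpointDefect (σ.potential A) (σ.norm.toSpace.symm (u n)) (σ.norm.toSpace.symm v) :=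
    fun n => midpointDefect_comp _ (σ.norm.toSpace.symm : σ.norm.Space →ₗ[ℝ] Y) (u n) v
  have hrot := hcore (σ.norm.toSpace.symm v) (fun n => σ.norm.toSpace.symm (u n)) <|
    squeeze_zero (fun n => midpointDefect_nonneg σ.quadraticallyBounded.convexOn _ _)
      (fun n => σ.midpointDefect_core_le A _ _)
      (by simpa only [hcomp, mul_zero] using hdefect.const_mul 8)
  simpa [Function.comp_def] using (σ.norm.toSpace.continuous.tendsto _).comp hrot

theorem differentiableAt_norm_strongDual (hY : IsReflexiveSpace Y)
    (hcore : LocallyUniformlyRotund σ.core) {f : StrongDual ℝ σ.norm.Space} (hf : f ≠ 0) :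
    DifferentiableAt ℝ (fun h : StrongDual ℝ σ.norm.Space => ‖h‖) f := by
  have hV := hY.congr σ.norm.toSpace
  obtain ⟨v, hv, hfv⟩ := hV.exists_norm_eq_one_apply_eq_norm hf
  exact hV.differentiableAt_norm_strongDual fun u hu hlim =>
    tendsto_of_tendsto_apply hcore hf hv hfv hu hlim

end PenaltySystem

/-! ### Smooth spaces tracking a well-founded relation -/

section Tracking

variable {E Q : Type u} [NormedAddCommGroup E] [NormedSpace ℝ E] {S : ProjectionSystem E}
  {r : Q → Q → Prop} {lev : Q → ℕ} {q : Q}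

/-- Along each chain the contractions `z s` are almost isometric on the ranges of the projections,
and they change little from one chain to its extensions. -/
structure TracksPaths (S : ProjectionSystem E) (lev : Q → ℕ) {V : Type*} [NormedAddCommGroup V]
    [NormedSpace ℝ V] (z : Path r q → E →L[ℝ] V) : Prop where
  scale_mul_norm_le : ∀ s, ∀ a ∈ S.range (lev s.tip),
    scale (lev s.tip) * ‖a‖ ≤ midScale (lev s.tip) * ‖z s a‖
  norm_apply_le : ∀ s a, ‖z s a‖ ≤ ‖a‖
  norm_snoc_sub_le : ∀ s q' h, ∀ a ∈ S.range (lev s.tip),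
    ‖z (s.snoc q' h) a - z s a‖ ≤ 2 * (scale (lev s.tip + 1) - scale (lev s.tip)) * ‖a‖

namespace PathSpace

variable (W : PathSpace S r lev q)

theorem norm_read_write_le_of_level_eq_zero (hq : lev q = 0) (t s : Path r q) (a : E) :
    ‖W.read t (W.write s a)‖ ≤ scale (lev t.tip) * ‖a‖ := by
  have h := W.norm_read_write_le t s a
  rw [hq] at h
  simpa [ProjectionSystem.base] using h

theorem read_write_self_of_level_eq_zero (hq : lev q = 0) (s : Path r q) (a : E) :
    W.read s (W.write s a) = scale (lev s.tip) • S.P (lev s.tip) a := by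
  have h := W.read_write_self s a
  rw [hq] at h
  simpa [ProjectionSystem.base] using h

/-- The functionals of `S` composed with the operators `W.read t`, and a given core. -/
noncomputable def penaltySystem {H : W → ℝ} (hH : QuadraticallyBounded H 2)
    (hlower : ∀ x, ‖x‖ ^ 2 / 2 ≤ H x) :
    PenaltySystem W (Σ t : Path r q, S.functionals (lev t.tip)) where
  functional j := (j.2 : StrongDual ℝ E) ∘L W.read j.1
  inner j := scale (lev j.1.tip)
  outer j := midScale (lev j.1.tip)
  core := H
  half_le_inner j := half_le_scale _
  inner_lt_outer j := scale_lt_midScale _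
  abs_functional_le j y := (S.abs_apply_le _ j.2.2 _).trans (W.norm_read_le _ _)
  locallyFinite y hy := by
    obtain ⟨A, hA, hev⟩ := W.locallyFinite 0 (zero_mem _) y fun t g hg => by
      simpa using hy ⟨t, g, hg⟩
    refine ⟨hA.toFinset.sigma fun _ => Finset.univ, ?_⟩
    have htend : Tendsto (fun z : W => ((0 : E), z)) (𝓝 y) (𝓝 (0, y)) :=
      (Continuous.prodMk_right 0).tendsto y
    filter_upwards [htend.eventually hev] with z hz j hj
    simpa using hz j.1 (by simpa using hj) j.2 j.2.2
  quadraticallyBounded := hH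
  half_norm_sq_le := hlower

theorem tracksPaths (hq : lev q = 0) {H : W → ℝ} (hH : QuadraticallyBounded H 2)
    (hlower : ∀ x, ‖x‖ ^ 2 / 2 ≤ H x) :
    TracksPaths S lev fun s =>
      ((W.penaltySystem hH hlower).norm.toSpace :
        W →L[ℝ] (W.penaltySystem hH hlower).norm.Space) ∘L W.write s where
  scale_mul_norm_le s a ha := by
    have hscale := scale_pos (lev s.tip)
    have ha' := S.mem_range.1 ha
    have h := S.norm_le (n := lev s.tip) (a := scale (lev s.tip) • a)
      (C := midScale (lev s.tip) * ‖(W.penaltySystem hH hlower).norm.toSpace (W.write s a)‖)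
      (mul_nonneg (hscale.trans (scale_lt_midScale _)).le (norm_nonneg _))
      (by rw [map_smul, ha']) fun g hg => by
        rw [← ha', ← W.read_write_self_of_level_eq_zero hq, ha']
        exact PenaltySystem.abs_functional_le_outer_mul
          (σ := W.penaltySystem hH hlower) ⟨s, g, hg⟩ (W.write s a)
    rwa [norm_smul, Real.norm_of_nonneg hscale.le] at h
  norm_apply_le s a := by
    rcases eq_or_ne a 0 with rfl | ha
    · simp
    have hnorm : ‖‖a‖⁻¹ • a‖ = 1 := norm_smul_inv_norm (𝕜 := ℝ) ha
    have hmem : W.write s (‖a‖⁻¹ • a) ∈ (W.penaltySystem hH hlower).unitBall := by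
      refine (W.penaltySystem hH hlower).mem_unitBall_of_le_inner (fun j => ?_) ?_
      · refine (S.abs_apply_le _ j.2.2 _).trans ?_
        simpa [hnorm, penaltySystem] using
          W.norm_read_write_le_of_level_eq_zero hq j.1 s (‖a‖⁻¹ • a)
      · simpa [hnorm] using W.norm_write_le s (‖a‖⁻¹ • a)
    have h := PenaltySystem.norm_toSpace_le_one_iff.2 hmem
    rwa [map_smul, map_smul, norm_smul, norm_inv, norm_norm,
      inv_mul_le_one₀ (norm_pos_iff.2 ha)] at h
  norm_snoc_sub_le s q' h a ha := by
    have hsnoc := W.norm_write_snoc_sub_le s q' h a ha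
    have hle := PenaltySystem.norm_toSpace_le (σ := W.penaltySystem hH hlower)
      (W.write (s.snoc q' h) a - W.write s a)
    rw [map_sub] at hle
    exact hle.trans (by linarith)

theorem exists_norm_differentiableAt (hq : lev q = 0) : ∃ p : EquivalentNorm W,
    TracksPaths S lev (fun s => (p.toSpace : W →L[ℝ] p.Space) ∘L W.write s) ∧
      ∀ v ≠ 0, DifferentiableAt ℝ (fun w : p.Space => ‖w‖) v := by
  obtain ⟨H, hH, hlower, hdiff⟩ := W.hasSmoothQuadratic.exists_half_norm_sq_le W.isReflexive
  exact ⟨_, W.tracksPaths hq (hH.mono one_le_two) hlower,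
    fun _ => PenaltySystem.differentiableAt_norm hdiff⟩

theorem exists_strongDual_norm_differentiableAt (hq : lev q = 0) : ∃ p : EquivalentNorm W,
    TracksPaths S lev (fun s => (p.toSpace : W →L[ℝ] p.Space) ∘L W.write s) ∧
      ∀ f ≠ 0, DifferentiableAt ℝ (fun h : StrongDual ℝ p.Space => ‖h‖) f := by
  obtain ⟨Λ, hΛ, hrot⟩ := W.hasRotundQuadratic.exists_quadraticallyBounded_one
  have hH := hΛ.add quadraticallyBounded_norm_sq
  rw [one_add_one_eq_two] at hH
  refine ⟨_, W.tracksPaths hq hH fun x => ?_, fun _ =>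
    PenaltySystem.differentiableAt_norm_strongDual W.isReflexive ?_⟩
  · linarith [hΛ.nonneg x, sq_nonneg ‖x‖]
  · refine fun x u hu => hrot x u ?_
    simp only [penaltySystem, midpointDefect_add] at hu
    exact squeeze_zero (fun n => midpointDefect_nonneg hΛ.convexOn _ _)
      (fun n => le_add_of_nonneg_right (midpointDefect_nonneg convexOn_norm_sq _ _)) hu

end PathSpace

end Tracking

/-! ### Chains of almost isometric operators -/

section Chains

theorem exists_norm_denseSeq_sub_lt {X : Type*} [SeminormedAddCommGroup X]
    [TopologicalSpace.SeparableSpace X] (x : X) {η : ℝ} (hη : 0 < η) :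
    ∃ j, ‖TopologicalSpace.denseSeq X j - x‖ < η := by
  obtain ⟨j, hj⟩ := (TopologicalSpace.denseRange_denseSeq X).exists_dist_lt x hη
  exact ⟨j, by rwa [norm_sub_rev, ← dist_eq_norm]⟩

variable {E X : Type*} [NormedAddCommGroup E] [NormedSpace ℝ E] [NormedAddCommGroup X]
  [NormedSpace ℝ X]

theorem cauchySeq_apply_of_mem_closure {T : ℕ → E →L[ℝ] X} {C : ℝ}
    (hT : ∀ k a, ‖T k a‖ ≤ C * ‖a‖) {s : Set E} (hs : ∀ b ∈ s, CauchySeq fun k => T k b) {a : E}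
    (ha : a ∈ closure s) : CauchySeq fun k => T k a := by
  rw [Metric.cauchySeq_iff']
  intro ε hε
  obtain ⟨b, hb, hab⟩ := Metric.mem_closure_iff.1 ha (ε / (3 * (|C| + 1))) (by positivity)
  obtain ⟨K, hK⟩ := Metric.cauchySeq_iff'.1 (hs b hb) (ε / 3) (by positivity)
  have hdist : ∀ k, dist (T k a) (T k b) < ε / 3 := fun k => by
    rw [dist_eq_norm, ← map_sub]
    rw [lt_div_iff₀ (by positivity), dist_eq_norm] at hab
    nlinarith [hT k (a - b), le_abs_self C, norm_nonneg (a - b)]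
  refine ⟨K, fun n hn => ?_⟩
  have := dist_triangle4 (T n a) (T n b) (T K b) (T K a)
  rw [dist_comm (T K b)] at this
  linarith [hdist n, hdist K, hK n hn]

variable (S : ProjectionSystem E)

/-- `T` is isometric on `S.range n` up to a factor exponentially close to `1`. -/
def AlmostIsometricOn (n : ℕ) (T : E →L[ℝ] X) : Prop :=
  ∀ a ∈ S.range n, |‖T a‖ - ‖a‖| ≤ (1 / 2) ^ (n + 1) * ‖a‖

/-- `T` and `T'` agree on `S.range n` up to an exponentially small error. -/
def ApproximatesOn (n : ℕ) (T T' : E →L[ℝ] X) : Prop :=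
  ∀ a ∈ S.range n, ‖T a - T' a‖ ≤ (1 / 2) ^ (n + 2) * ‖a‖

variable {S}

theorem AlmostIsometricOn.norm_apply_P_le {n : ℕ} {T : E →L[ℝ] X} (hT : AlmostIsometricOn S n T)
    (a : E) : ‖T (S.P n a)‖ ≤ 2 * ‖a‖ := by
  have h := (abs_le.1 (hT _ ⟨a, rfl⟩)).2
  have hpow : (1 / 2 : ℝ) ^ (n + 1) ≤ 1 := pow_le_one₀ (by norm_num) (by norm_num)
  change ‖T (S.P n a)‖ - ‖S.P n a‖ ≤ (1 / 2) ^ (n + 1) * ‖S.P n a‖ at h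
  nlinarith [S.norm_P_le n a, norm_nonneg (S.P n a)]

variable {T : ℕ → E →L[ℝ] X} {m : ℕ}

theorem cauchySeq_apply_P_of_norm_sub_le
    (hsucc : ∀ k, ∀ a ∈ S.range (m + k), ‖T (k + 1) a - T k a‖ ≤ (1 / 2) ^ (m + k) * ‖a‖)
    {n : ℕ} {a : E} (ha : a ∈ S.range n) : CauchySeq fun k => T k (S.P (m + k) a) := by
  rw [← cauchySeq_shift n]
  refine cauchySeq_of_le_geometric (1 / 2) ‖a‖ (by norm_num) fun k => ?_
  have hP : ∀ i ≥ n, S.P i a = a := fun i hi => S.mem_range.1 (S.monotone_range hi ha)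
  rw [hP _ (by lia), hP _ (by lia), dist_comm, dist_eq_norm, add_right_comm]
  refine (hsucc (k + n) a (S.monotone_range (by lia) ha)).trans ?_
  rw [mul_comm]
  exact mul_le_mul_of_nonneg_left
    (pow_le_pow_of_le_one (by norm_num) (by norm_num) (by lia)) (norm_nonneg a)

theorem tendsto_norm_apply_P_of_almostIsometricOn (hT : ∀ k, AlmostIsometricOn S (m + k) (T k))
    (a : E) : Tendsto (fun k => ‖T k (S.P (m + k) a)‖) atTop (𝓝 ‖a‖) := by
  have hP : Tendsto (fun k => ‖S.P (m + k) a‖) atTop (𝓝 ‖a‖) :=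
    ((S.tendsto_P a).comp (tendsto_atTop_mono (fun k => k.le_add_left m) tendsto_id)).norm
  have hpow : Tendsto (fun k => (1 / 2 : ℝ) ^ (m + k + 1)) atTop (𝓝 0) :=
    (tendsto_pow_atTop_nhds_zero_of_lt_one (by norm_num) (by norm_num)).comp
      (tendsto_atTop_mono (fun k => by change k ≤ m + k + 1; lia) tendsto_id)
  have hsub : Tendsto (fun k => ‖T k (S.P (m + k) a)‖ - ‖S.P (m + k) a‖) atTop (𝓝 0) :=
    squeeze_zero_norm (fun k => hT k _ ⟨a, rfl⟩) (by simpa using hpow.mul hP)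
  simpa using hsub.add hP

theorem nonempty_linearIsometry_of_almostIsometricOn [CompleteSpace X]
    (hT : ∀ k, AlmostIsometricOn S (m + k) (T k))
    (hsucc : ∀ k, ∀ a ∈ S.range (m + k), ‖T (k + 1) a - T k a‖ ≤ (1 / 2) ^ (m + k) * ‖a‖) :
    Nonempty (E →ₗᵢ[ℝ] X) := by
  have hlim : ∀ a, ∃ x, Tendsto (fun k => (T k ∘L S.P (m + k)) a) atTop (𝓝 x) := fun a =>
    cauchySeq_tendsto_of_complete <| cauchySeq_apply_of_mem_closure
      (fun k => (hT k).norm_apply_P_le) (s := ⋃ n, (S.range n : Set E))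
      (fun b hb => let ⟨_, hn⟩ := mem_iUnion.1 hb; cauchySeq_apply_P_of_norm_sub_le hsucc hn)
      (mem_closure_of_tendsto (S.tendsto_P a) (.of_forall fun n => mem_iUnion.2 ⟨n, a, rfl⟩))
  choose L hL using hlim
  exact ⟨linearMapOfTendsto L (fun k => (T k ∘L S.P (m + k) : E →ₗ[ℝ] X)) (l := atTop)
    (tendsto_pi_nhds.2 hL), fun a => tendsto_nhds_unique (hL a).norm
      (tendsto_norm_apply_P_of_almostIsometricOn hT a)⟩

variable (S) in
theorem ProjectionSystem.exists_dense_operators [TopologicalSpace.SeparableSpace X] :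
    ∃ u : ℕ × ℕ → E →L[ℝ] X, ∀ n (T : E →L[ℝ] X), ∀ η > 0,
      ∃ j, ∀ a ∈ S.range n, ‖u (n, j) a - T a‖ ≤ η * ‖a‖ := by
  have : SecondCountableTopology X := UniformSpace.secondCountable_of_separable X
  let proj n : E →L[ℝ] S.range n := (S.P n).rangeRestrict
  refine ⟨fun q => TopologicalSpace.denseSeq (S.range q.1 →L[ℝ] X) q.2 ∘L proj q.1,
    fun n T η hη => ?_⟩
  obtain ⟨j, hj⟩ := exists_norm_denseSeq_sub_lt (T ∘L (S.range n).subtypeL) hη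
  refine ⟨j, fun a ha => ?_⟩
  have hproj : proj n a = ⟨a, ha⟩ := Subtype.ext (S.mem_range.1 ha)
  simpa [hproj] using ContinuousLinearMap.le_of_opNorm_le _ hj.le ⟨a, ha⟩

variable (S) in
/-- For a family `u` of operators indexed by pairs (level, label): `u q` and `u q'` are almost
isometric on consecutive ranges, and `u q'` almost extends `u q`. -/
structure AlmostExtends (u : ℕ × ℕ → E →L[ℝ] X) (q q' : ℕ × ℕ) : Prop where
  fst_eq : q'.1 = q.1 + 1
  left : AlmostIsometricOn S q.1 (u q)
  right : AlmostIsometricOn S q'.1 (u q')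
  norm_sub_le : ∀ a ∈ S.range q.1, ‖u q' a - u q a‖ ≤ (1 / 2) ^ q.1 * ‖a‖

theorem nonempty_linearIsometry_of_not_wellFounded [CompleteSpace X] {u : ℕ × ℕ → E →L[ℝ] X}
    (h : ¬ WellFounded (Function.swap (AlmostExtends S u))) : Nonempty (E →ₗᵢ[ℝ] X) := by
  rw [wellFounded_iff_isEmpty_descending_chain, not_isEmpty_iff] at h
  obtain ⟨f, hf : ∀ k, AlmostExtends S u (f k) (f (k + 1))⟩ := h
  have hlev : ∀ k, (f k).1 = (f 0).1 + k := fun k => by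
    induction k with
    | zero => rfl
    | succ k ih => rw [(hf k).fst_eq, ih, add_assoc]
  exact nonempty_linearIsometry_of_almostIsometricOn (T := fun k => u (f k)) (m := (f 0).1)
    (fun k => hlev k ▸ (hf k).left) fun k => hlev k ▸ (hf k).norm_sub_le

/-- `AlmostExtends S u` with a root `none` below the almost isometries of level `0`. -/
def RootedAlmostExtends (S : ProjectionSystem E) (u : ℕ × ℕ → E →L[ℝ] X) :
    Option (ℕ × ℕ) → Option (ℕ × ℕ) → Prop
  | none, some q => q.1 = 0 ∧ AlmostIsometricOn S q.1 (u q)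
  | some q, some q' => AlmostExtends S u q q'
  | _, none => False

/-- The level for which `RootedAlmostExtends` increases levels by one. -/
def rootedLevel : Option (ℕ × ℕ) → ℕ
  | none => 0
  | some q => q.1 + 1

namespace RootedAlmostExtends

variable {u : ℕ × ℕ → E →L[ℝ] X}

theorem rootedLevel_eq : ∀ q q', RootedAlmostExtends S u q q' →
    rootedLevel q' = rootedLevel q + 1
  | none, some q, h => by simp [rootedLevel, h.1]
  | some q, some q', h => by simp [rootedLevel, h.fst_eq]

theorem almostIsometricOn : ∀ {q : Option (ℕ × ℕ)} {q' : ℕ × ℕ},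
    RootedAlmostExtends S u q (some q') → AlmostIsometricOn S q'.1 (u q')
  | none, _, h => h.2
  | some _, _, h => h.right

theorem wellFounded (hwf : WellFounded (Function.swap (AlmostExtends S u))) :
    WellFounded (Function.swap (RootedAlmostExtends S u)) := by
  have acc_some : ∀ q, Acc (Function.swap (RootedAlmostExtends S u)) (some q) := fun q => by
    induction q using hwf.induction with
    | _ q ih => exact ⟨_, fun
        | some q', h => ih q' h⟩
  exact ⟨fun
    | some q => acc_some q
    | none => ⟨_, fun
        | some q, _ => acc_some q⟩⟩

end RootedAlmostExtends

end Chains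

section Tracking

variable {E Q : Type u} [NormedAddCommGroup E] [NormedSpace ℝ E] {S : ProjectionSystem E}
  {V X : Type*} [NormedAddCommGroup V] [NormedSpace ℝ V] [NormedAddCommGroup X] [NormedSpace ℝ X]

namespace TracksPaths

variable {r : Q → Q → Prop} {lev : Q → ℕ} {q : Q} {z : Path r q → E →L[ℝ] V}

theorem abs_norm_apply_sub_norm_le (hz : TracksPaths S lev z) (s : Path r q) {a : E}
    (ha : a ∈ S.range (lev s.tip)) :
    |‖z s a‖ - ‖a‖| ≤ (1 / 2) ^ (lev s.tip + 2) * ‖a‖ := by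
  have hle := hz.norm_apply_le s a
  have hscale := hz.scale_mul_norm_le s a ha
  rw [midScale, scale_succ] at hscale
  have hhalf := half_le_scale (lev s.tip)
  have hpow : 0 < (1 / 2 : ℝ) ^ (lev s.tip + 2) := by positivity
  rw [abs_sub_comm, abs_of_nonneg (sub_nonneg.2 hle)]
  nlinarith [mul_le_mul_of_nonneg_left hle hpow.le]

theorem almostIsometricOn (hz : TracksPaths S lev z) (U : V →ₗᵢ[ℝ] X) {s : Path r q} {n : ℕ}
    (hn : lev s.tip = n) {T : E →L[ℝ] X}
    (hT : ApproximatesOn S n T (U.toContinuousLinearMap ∘L z s)) : AlmostIsometricOn S n T := by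
  subst hn
  intro a ha
  calc |‖T a‖ - ‖a‖| ≤ |‖T a‖ - ‖U (z s a)‖| + |‖U (z s a)‖ - ‖a‖| := abs_sub_le _ _ _
    _ ≤ (1 / 2) ^ (lev s.tip + 2) * ‖a‖ + (1 / 2) ^ (lev s.tip + 2) * ‖a‖ := by
        gcongr
        · exact (abs_norm_sub_norm_le _ _).trans (hT a ha)
        · rw [U.norm_map]
          exact hz.abs_norm_apply_sub_norm_le s ha
    _ = (1 / 2) ^ (lev s.tip + 1) * ‖a‖ := by ring

end TracksPaths

end Tracking

section Embedding

variable {E : Type} [NormedAddCommGroup E] [NormedSpace ℝ E] {S : ProjectionSystem E}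
  {V X : Type*} [NormedAddCommGroup V] [NormedSpace ℝ V] [NormedAddCommGroup X] [NormedSpace ℝ X]
  {u : ℕ × ℕ → E →L[ℝ] X} {z : Path (RootedAlmostExtends S u) none → E →L[ℝ] V}

theorem almostExtends_of_approximatesOn (hz : TracksPaths S rootedLevel z) (U : V →ₗᵢ[ℝ] X)
    {s : Path (RootedAlmostExtends S u) none} {q : ℕ × ℕ}
    (h : RootedAlmostExtends S u s.tip (some q))
    (hq : ApproximatesOn S q.1 (u q) (U.toContinuousLinearMap ∘L z s)) {j : ℕ}
    (hj : ApproximatesOn S (q.1 + 1) (u (q.1 + 1, j))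
      (U.toContinuousLinearMap ∘L z (s.snoc (some q) h))) :
    AlmostExtends S u q (q.1 + 1, j) := by
  have hlev : rootedLevel s.tip = q.1 :=
    (Nat.succ_injective (RootedAlmostExtends.rootedLevel_eq _ _ h)).symm
  refine ⟨rfl, h.almostIsometricOn, hz.almostIsometricOn U (by rw [s.tip_snoc]; rfl) hj,
    fun a ha => ?_⟩
  have hsnoc := hz.norm_snoc_sub_le s (some q) h a (hlev ▸ ha)
  rw [hlev, scale_succ, add_sub_cancel_left, ← U.norm_map, map_sub] at hsnoc
  calc ‖u (q.1 + 1, j) a - u q a‖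
      ≤ ‖u (q.1 + 1, j) a - U (z (s.snoc (some q) h) a)‖ +
        ‖U (z (s.snoc (some q) h) a) - U (z s a)‖ + ‖U (z s a) - u q a‖ := by
        simpa only [dist_eq_norm] using dist_triangle4
          (u (q.1 + 1, j) a) (U (z (s.snoc (some q) h) a)) (U (z s a)) (u q a)
    _ ≤ (1 / 2) ^ (q.1 + 1 + 2) * ‖a‖ + 2 * (1 / 2) ^ (q.1 + 2) * ‖a‖ +
        (1 / 2) ^ (q.1 + 2) * ‖a‖ := by
        gcongr
        · exact hj a (S.monotone_range q.1.le_succ ha)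
        · exact norm_sub_rev (u q a) _ ▸ hq a ha
    _ = 7 / 8 * ((1 / 2) ^ q.1 * ‖a‖) := by ring
    _ ≤ (1 / 2) ^ q.1 * ‖a‖ := mul_le_of_le_one_left (by positivity) (by norm_num)

theorem not_approximatesOn_of_wellFounded
    (hu : ∀ n (T : E →L[ℝ] X), ∃ j, ApproximatesOn S n (u (n, j)) T)
    (hwf : WellFounded (Function.swap (AlmostExtends S u)))
    (hz : TracksPaths S rootedLevel z) (U : V →ₗᵢ[ℝ] X) (q : ℕ × ℕ)
    (s : Path (RootedAlmostExtends S u) none) (h : RootedAlmostExtends S u s.tip (some q)) :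
    ¬ ApproximatesOn S q.1 (u q) (U.toContinuousLinearMap ∘L z s) := by
  induction q using hwf.induction generalizing s with
  | _ q ih =>
    intro hq
    obtain ⟨j, hj⟩ := hu (q.1 + 1) (U.toContinuousLinearMap ∘L z (s.snoc (some q) h))
    have hext := almostExtends_of_approximatesOn hz U h hq hj
    exact ih (q.1 + 1, j) hext (s.snoc (some q) h) (by rw [s.tip_snoc]; exact hext) hj

theorem isEmpty_linearIsometry_of_wellFounded
    (hu : ∀ n (T : E →L[ℝ] X), ∃ j, ApproximatesOn S n (u (n, j)) T)
    (hwf : WellFounded (Function.swap (AlmostExtends S u))) (hz : TracksPaths S rootedLevel z) :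
    IsEmpty (V →ₗᵢ[ℝ] X) := by
  refine ⟨fun U => ?_⟩
  obtain ⟨j, hj⟩ := hu 0 (U.toContinuousLinearMap ∘L z .root)
  exact not_approximatesOn_of_wellFounded hu hwf hz U (0, j) .root
    ⟨rfl, hz.almostIsometricOn (s := .root) (n := 0) U rfl hj⟩ hj

theorem nonempty_linearIsometry_of_forall_pathSpace [CompleteSpace X]
    [TopologicalSpace.SeparableSpace X]
    (hX : ∀ (r : Option (ℕ × ℕ) → Option (ℕ × ℕ) → Prop) (lev : Option (ℕ × ℕ) → ℕ)
      (W : PathSpace S r lev none), lev none = 0 → ∃ p : EquivalentNorm W,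
        TracksPaths S lev (fun s => (p.toSpace : W →L[ℝ] p.Space) ∘L W.write s) ∧
          Nonempty (p.Space →ₗᵢ[ℝ] X)) :
    Nonempty (E →ₗᵢ[ℝ] X) := by
  obtain ⟨u, hu⟩ := S.exists_dense_operators (X := X)
  by_cases hwf : WellFounded (Function.swap (AlmostExtends S u))
  · obtain ⟨p, hp, ⟨U⟩⟩ := hX (RootedAlmostExtends S u) rootedLevel
      (.ofWellFounded RootedAlmostExtends.rootedLevel_eq (RootedAlmostExtends.wellFounded hwf) none)
      rfl
    exact ((isEmpty_linearIsometry_of_wellFounded (fun n T => hu n T _ (by positivity)) hwf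
      hp).false U).elim
  · exact nonempty_linearIsometry_of_not_wellFounded hwf

end Embedding

/-! ### The space of continuous functions on the Cantor space -/

/-- The sequence `ω` with all terms from the `n`-th on replaced by `false`. -/
def truncate (n : ℕ) (ω : ℕ → Bool) : ℕ → Bool := fun k => if k < n then ω k else false

theorem continuous_truncate (n : ℕ) : Continuous (truncate n) := by
  refine continuous_pi fun k => ?_
  by_cases h : k < n
  · simpa only [truncate, if_pos h] using continuous_apply k
  · simpa only [truncate, if_neg h] using continuous_const

theorem truncate_truncate (k n : ℕ) (ω : ℕ → Bool) :
    truncate k (truncate n ω) = truncate (min k n) ω := by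
  ext j
  simp only [truncate, lt_min_iff]
  split_ifs <;> simp_all

theorem finite_range_truncate (n : ℕ) : (range (truncate n)).Finite := by
  refine Finite.subset
    (finite_range fun (σ : Fin n → Bool) k => if h : k < n then σ ⟨k, h⟩ else false)
    (range_subset_iff.2 fun ω => ⟨fun i => ω i, ?_⟩)
  ext k
  simp [truncate]

theorem tendstoUniformly_truncate : TendstoUniformly truncate id atTop := by
  rw [tendstoUniformly_iff_tendsto, Pi.uniformity, tendsto_iInf]
  intro k
  rw [tendsto_comap_iff]
  refine Tendsto.congr' (f₁ := fun q : ℕ × (ℕ → Bool) => (q.2 k, q.2 k)) ?_ ?_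
  · filter_upwards [(eventually_gt_atTop k).prod_inl ⊤] with q hq
    simp [truncate, hq]
  · exact tendsto_diag_uniformity (fun q : ℕ × (ℕ → Bool) => q.2 k) _

/-- Composition with `truncate n`. -/
noncomputable def compTruncate (n : ℕ) : C(ℕ → Bool, ℝ) →L[ℝ] C(ℕ → Bool, ℝ) where
  toLinearMap := (ContinuousMap.compRightAlgHom ℝ ℝ ⟨truncate n, continuous_truncate n⟩).toLinearMap
  cont := ContinuousMap.compRightAlgHom_continuous ℝ ℝ _

theorem compTruncate_apply (n : ℕ) (a : C(ℕ → Bool, ℝ)) (ω : ℕ → Bool) :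
    compTruncate n a ω = a (truncate n ω) := rfl

theorem compTruncate_compTruncate (k n : ℕ) (a : C(ℕ → Bool, ℝ)) :
    compTruncate k (compTruncate n a) = compTruncate (min n k) a := by
  ext ω
  rw [compTruncate_apply, compTruncate_apply, truncate_truncate, compTruncate_apply]

theorem finiteDimensional_range_compTruncate (n : ℕ) :
    FiniteDimensional ℝ (compTruncate n).range := by
  have := (finite_range_truncate n).to_subtype
  let eval : C(ℕ → Bool, ℝ) →ₗ[ℝ] (range (truncate n) → ℝ) :=
    LinearMap.pi fun ω => (ContinuousMap.evalCLM ℝ (ω : ℕ → Bool)).toLinearMap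
  refine Module.Finite.of_injective (eval ∘ₗ (compTruncate n).range.subtype) ?_
  rintro ⟨_, a, rfl⟩ ⟨_, b, rfl⟩ hab
  refine Subtype.ext (ContinuousMap.ext fun ω => ?_)
  have h := congrFun hab ⟨truncate n ω, ω, rfl⟩
  change compTruncate n a (truncate n ω) = compTruncate n b (truncate n ω) at h
  rw [compTruncate_apply, compTruncate_apply, truncate_truncate, min_self] at h
  exact h

/-- The system of the projections `compTruncate n` on the space of continuous functions on the
Cantor space. -/
noncomputable def cantorSystem : ProjectionSystem C(ℕ → Bool, ℝ) where
  P := compTruncate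
  norm_P_le n a := (ContinuousMap.norm_le _ (norm_nonneg a)).2 fun ω => a.norm_coe_le_norm _
  P_P_of_le h a := by rw [compTruncate_compTruncate, min_eq_right h]
  P_P_of_ge h a := by rw [compTruncate_compTruncate, min_eq_left h]
  finiteDimensional := finiteDimensional_range_compTruncate
  tendsto_P a := by
    rw [ContinuousMap.tendsto_iff_tendstoUniformly]
    exact (CompactSpace.uniformContinuous_of_continuous a.continuous).comp_tendstoUniformly
      tendstoUniformly_truncate
  functionals n := ((finite_range_truncate n).image (ContinuousMap.evalCLM ℝ)).toFinset
  abs_apply_le g hg a := by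
    obtain ⟨ω, -, rfl⟩ := (Set.Finite.mem_toFinset _).1 hg
    exact a.norm_coe_le_norm ω
  norm_le {n a C} hC ha h := (ContinuousMap.norm_le _ hC).2 fun ω => by
    rw [← ha]
    exact h (ContinuousMap.evalCLM ℝ (truncate n ω))
      ((Set.Finite.mem_toFinset _).2 ⟨_, ⟨ω, rfl⟩, rfl⟩)

variable (Z : Type*) [NormedAddCommGroup Z] [NormedSpace ℝ Z]

theorem exists_continuous_surjective_dualUnitBall [TopologicalSpace.SeparableSpace Z] :
    ∃ φ : (ℕ → Bool) → WeakDual ℝ Z, Continuous φ ∧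
      range φ = WeakDual.toStrongDual ⁻¹' Metric.closedBall 0 1 := by
  set K : Set (WeakDual ℝ Z) := WeakDual.toStrongDual ⁻¹' Metric.closedBall 0 1
  have hK : IsCompact K := WeakDual.isCompact_closedBall 0 1
  have : TopologicalSpace.MetrizableSpace K := WeakDual.metrizable_of_isCompact ℝ Z K hK
  let _ : MetricSpace K := TopologicalSpace.metrizableSpaceMetric K
  have : CompactSpace K := isCompact_iff_compactSpace.1 hK
  have : Nonempty K := ⟨⟨0, by simp [K]⟩⟩
  obtain ⟨φ, hφ, hsurj⟩ := exists_nat_bool_continuous_surjective_of_compact K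
  exact ⟨fun ω => φ ω, continuous_subtype_val.comp hφ, by
    rw [range_comp' Subtype.val φ, hsurj.range_eq, image_univ, Subtype.range_coe]⟩

theorem banach_mazur [TopologicalSpace.SeparableSpace Z] :
    Nonempty (Z →ₗᵢ[ℝ] C(ℕ → Bool, ℝ)) := by
  obtain ⟨φ, hφ, hrange⟩ := exists_continuous_surjective_dualUnitBall Z
  let T : Z →ₗ[ℝ] C(ℕ → Bool, ℝ) :=
    { toFun := fun z => ⟨fun ω => φ ω z, (WeakDual.eval_continuous z).comp hφ⟩
      map_add' := fun x y => by ext ω; exact map_add (φ ω) x y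
      map_smul' := fun c x => by ext ω; exact map_smul (φ ω) c x }
  refine ⟨T, fun z => le_antisymm ?_ ?_⟩
  · refine (ContinuousMap.norm_le _ (norm_nonneg z)).2 fun ω => ?_
    have hω : φ ω ∈ WeakDual.toStrongDual ⁻¹' Metric.closedBall 0 1 := hrange ▸ mem_range_self ω
    change ‖φ ω z‖ ≤ ‖z‖
    simpa using (WeakDual.toStrongDual (φ ω)).le_of_opNorm_le (mem_closedBall_zero_iff.1 hω) z
  · obtain ⟨g, hg, hgz⟩ := exists_dual_vector'' ℝ z
    obtain ⟨ω, hω⟩ : StrongDual.toWeakDual g ∈ range φ := by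
      rw [hrange]
      simpa using hg
    calc ‖z‖ = ‖T z ω‖ := by
          change _ = ‖φ ω z‖
          rw [hω]
          change _ = ‖g z‖
          simp [hgz]
      _ ≤ ‖T z‖ := (T z).norm_coe_le_norm ω

end FrechetUniversality

/-- If a separable Banach space `X` contains an isometric copy of every
separable reflexive Banach space with Fréchet smooth norm, then `X` contains an isometric
copy of every separable Banach space.  The same conclusion holds if `X` contains an
isometric copy of every separable Banach space whose dual norm is Fréchet smooth. -/
theorem universality_of_frechet_smooth_classes
    (X : Type) [NormedAddCommGroup X] [NormedSpace ℝ X] [CompleteSpace X]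
    [TopologicalSpace.SeparableSpace X] :
    ((∀ (Z : Type) [NormedAddCommGroup Z] [NormedSpace ℝ Z] [CompleteSpace Z]
        [TopologicalSpace.SeparableSpace Z],
        Function.Surjective (NormedSpace.inclusionInDoubleDual ℝ Z) →
        (∀ z : Z, z ≠ 0 → DifferentiableAt ℝ (fun w : Z => ‖w‖) z) →
        Nonempty (Z →ₗᵢ[ℝ] X)) →
      (∀ (Z : Type) [NormedAddCommGroup Z] [NormedSpace ℝ Z] [CompleteSpace Z]
        [TopologicalSpace.SeparableSpace Z], Nonempty (Z →ₗᵢ[ℝ] X))) ∧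
    ((∀ (Z : Type) [NormedAddCommGroup Z] [NormedSpace ℝ Z] [CompleteSpace Z]
        [TopologicalSpace.SeparableSpace Z],
        (∀ g : Z →L[ℝ] ℝ, g ≠ 0 →
          DifferentiableAt ℝ (fun h : Z →L[ℝ] ℝ => ‖h‖) g) →
        Nonempty (Z →ₗᵢ[ℝ] X)) →
      (∀ (Z : Type) [NormedAddCommGroup Z] [NormedSpace ℝ Z] [CompleteSpace Z]
        [TopologicalSpace.SeparableSpace Z], Nonempty (Z →ₗᵢ[ℝ] X))) := by
  have embeds_of_cantor : Nonempty (C(ℕ → Bool, ℝ) →ₗᵢ[ℝ] X) → ∀ (Z : Type)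
      [NormedAddCommGroup Z] [NormedSpace ℝ Z] [CompleteSpace Z]
      [TopologicalSpace.SeparableSpace Z], Nonempty (Z →ₗᵢ[ℝ] X) := fun ⟨U⟩ Z _ _ _ _ =>
    (FrechetUniversality.banach_mazur Z).map U.comp
  refine ⟨fun hX => embeds_of_cantor ?_, fun hX => embeds_of_cantor ?_⟩ <;>
    refine FrechetUniversality.nonempty_linearIsometry_of_forall_pathSpace
      (S := FrechetUniversality.cantorSystem) fun r lev W hlev => ?_
  · obtain ⟨p, hp, hdiff⟩ := W.exists_norm_differentiableAt hlev
    exact ⟨p, hp, hX p.Space (W.isReflexive.congr p.toSpace) hdiff⟩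
  · obtain ⟨p, hp, hdiff⟩ := W.exists_strongDual_norm_differentiableAt hlev
    exact ⟨p, hp, hX p.Space hdiff⟩
end
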